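/- arXiv:2010.00546 — 7 statements merged into one kernel-verified Lean document; each statement's English description precedes it below -/
import Mathlib

section
/- For every α ∈ (0,1), the Sibuya(α) probabilities have the fat-tailed asymptotics w_α(k) ~ (α/Γ(1−α)) k^{−α−1} as k → ∞; that is, lim_{k→∞} k^{α+1} · w_α(k) = α/Γ(1−α). -/
/-- Sibuya(α) probabilities: `w_α(k) = (−1)^{k−1} (α choose k)` with
`(α choose k) = (∏_{j=0}^{k-1} (α − j)) / k!`. -/
noncomputable def sibuya (α : ℝ) (k : ℕ) : ℝ :=
  (-1 : ℝ) ^ (k - 1) * ((∏ j ∈ Finset.range k, (α - (j : ℝ))) / (k.factorial : ℝ))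

/-- The rescaled Sibuya weights in terms of Euler's sequence for the Gamma function at `-α`. -/
theorem rpow_mul_sibuya_eq {α : ℝ} {k : ℕ} (hk : k ≠ 0) (hαk : (k : ℝ) - α ≠ 0) :
    (k : ℝ) ^ (α + 1) * sibuya α k =
      -(Real.GammaSeq (-α) k)⁻¹ * ((k : ℝ) / (k - α)) := by
  have hk0 : (0 : ℝ) < k := by exact_mod_cast Nat.pos_of_ne_zero hk
  have hprod : ∏ j ∈ Finset.range k, (-α + (j : ℝ)) =
      (-1) ^ k * ∏ j ∈ Finset.range k, (α - (j : ℝ)) := by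
    rw [← Finset.card_range k, ← Finset.prod_const, Finset.card_range, ← Finset.prod_mul_distrib]
    exact Finset.prod_congr rfl fun j _ => by ring
  have hsign : (-1 : ℝ) ^ k = -(-1) ^ (k - 1) := by
    obtain ⟨m, rfl⟩ := Nat.exists_eq_succ_of_ne_zero hk
    simp [pow_succ]
  rw [sibuya, Real.GammaSeq, Finset.prod_range_succ, hprod, hsign, Real.rpow_add_one hk0.ne',
    Real.rpow_neg hk0.le, neg_add_eq_sub]
  have := (Real.rpow_pos_of_pos hk0 α).ne'
  field_simp

/-- For every `α ∈ (0,1)`, the fat-tailed asymptotics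
`lim_{k→∞} k^{α+1} · w_α(k) = α / Γ(1−α)`. -/
theorem sibuya_tail_asymptotics (α : ℝ) (hα : α ∈ Set.Ioo (0 : ℝ) 1) :
    Filter.Tendsto (fun k : ℕ => (k : ℝ) ^ (α + 1) * sibuya α k)
      Filter.atTop (nhds (α / Real.Gamma (1 - α))) := by
  have hΓ : Real.Gamma (1 - α) = -α * Real.Gamma (-α) := by
    rw [← Real.Gamma_add_one (neg_ne_zero.mpr hα.1.ne'), neg_add_eq_sub]
  have hΓ0 : Real.Gamma (-α) ≠ 0 := fun h =>
    (Real.Gamma_pos_of_pos (sub_pos.mpr hα.2)).ne' (by rw [hΓ, h, mul_zero])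
  have hlim : α / Real.Gamma (1 - α) = -(Real.Gamma (-α))⁻¹ * 1 := by
    have := hα.1.ne'
    rw [hΓ]
    field_simp
  have hratio : Filter.Tendsto (fun k : ℕ => (k : ℝ) / (k - α)) Filter.atTop (nhds 1) := by
    simpa [sub_eq_add_neg] using tendsto_natCast_div_add_atTop (-α)
  rw [hlim]
  refine (((Real.GammaSeq_tendsto_Gamma (-α)).inv₀ hΓ0).neg.mul hratio).congr' ?_
  filter_upwards [Filter.eventually_ge_atTop 1] with k hk
  have hk1 : (1 : ℝ) ≤ k := by exact_mod_cast hk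
  exact (rpow_mul_sibuya_eq (by lia) (by linarith [hα.2] : (0 : ℝ) < k - α).ne').symm
end

section
/- Let L be a real N×N matrix (N ≥ 1 finite) such that there exist Λ > 1 and a positive integer n₀ with: every entry of the matrix Λ·I − L is nonnegative, and for every n ≥ n₀ every entry of (Λ·I − L)^n is strictly positive. Then every entry of the matrix exponential exp(−L) is strictly positive. -/
/-- Matrix exponential `exp(A) = Σ_{n=0}^∞ A^n / n!`. -/
noncomputable def matExp {N : ℕ} (A : Matrix (Fin N) (Fin N) ℝ) : Matrix (Fin N) (Fin N) ℝ :=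
  ∑' n : ℕ, ((n.factorial : ℝ)⁻¹) • A ^ n

open NormedSpace in
/-- The exponential series of a real square matrix converges to `NormedSpace.exp`. -/
theorem hasSum_matrix_exp {N : ℕ} (A : Matrix (Fin N) (Fin N) ℝ) :
    HasSum (fun n : ℕ => ((n.factorial : ℝ)⁻¹) • A ^ n) (exp A) := by
  let : NormedRing (Matrix (Fin N) (Fin N) ℝ) := Matrix.linftyOpNormedRing
  let : NormedAlgebra ℝ (Matrix (Fin N) (Fin N) ℝ) := Matrix.linftyOpNormedAlgebra
  let : NormedAlgebra ℚ (Matrix (Fin N) (Fin N) ℝ) := .restrictScalars ℚ ℝ _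
  exact exp_series_hasSum_exp' (𝕂 := ℝ) A

theorem matExp_eq_exp {N : ℕ} (A : Matrix (Fin N) (Fin N) ℝ) :
    matExp A = NormedSpace.exp A :=
  (hasSum_matrix_exp A).tsum_eq

/-- Shifting a matrix by a multiple of the identity rescales its exponential. -/
theorem matExp_add_smul_one {N : ℕ} (A : Matrix (Fin N) (Fin N) ℝ) (c : ℝ) :
    matExp (A + c • 1) = Real.exp c • matExp A := by
  simp only [matExp_eq_exp]
  rw [Matrix.exp_add_of_commute _ _ ((Commute.one_right A).smul_right c),
    Matrix.smul_one_eq_diagonal, Matrix.exp_diagonal, Pi.exp_def, ← Real.exp_eq_exp_ℝ,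
    ← Matrix.smul_one_eq_diagonal, mul_smul_comm, mul_one]

/-- An entry of the exponential of a nonnegative matrix is positive as soon as the same entry of
some power is. -/
theorem matExp_apply_pos {N : ℕ} {A : Matrix (Fin N) (Fin N) ℝ} (hA : ∀ i j, 0 ≤ A i j)
    {n : ℕ} {i j : Fin N} (hn : 0 < (A ^ n) i j) : 0 < matExp A i j := by
  have hsum : HasSum (fun m : ℕ => ((m.factorial : ℝ)⁻¹) * (A ^ m) i j) (matExp A i j) := by
    rw [matExp_eq_exp]
    exact Pi.hasSum.1 (Pi.hasSum.1 (hasSum_matrix_exp A) i) j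
  have hterm : 0 < ((n.factorial : ℝ)⁻¹) * (A ^ n) i j := by positivity
  exact hterm.trans_le <| le_hasSum hsum n fun m _ =>
    mul_nonneg (by positivity) (Matrix.pow_apply_nonneg hA m i j)

/-- If there exist `Λ > 1` and `n₀ ≥ 1` such that `Λ·I − L` has nonnegative entries and
`(Λ·I − L)^n` has strictly positive entries for every `n ≥ n₀`, then every entry of
`exp(−L)` is strictly positive. -/
theorem matExp_neg_entries_pos (N : ℕ) (hN : 1 ≤ N) (L : Matrix (Fin N) (Fin N) ℝ)
    (Λ : ℝ) (hΛ : 1 < Λ) (n₀ : ℕ) (hn₀ : 1 ≤ n₀)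
    (hnonneg : ∀ i j, 0 ≤ (Λ • (1 : Matrix (Fin N) (Fin N) ℝ) - L) i j)
    (hpos : ∀ n, n₀ ≤ n → ∀ i j, 0 < ((Λ • (1 : Matrix (Fin N) (Fin N) ℝ) - L) ^ n) i j) :
    ∀ i j, 0 < matExp (-L) i j := by
  intro i j
  have hL : -L = (Λ • (1 : Matrix (Fin N) (Fin N) ℝ) - L) + (-Λ) • 1 := by
    rw [neg_smul]; abel
  rw [hL, matExp_add_smul_one, Matrix.smul_apply, smul_eq_mul]
  exact mul_pos (Real.exp_pos _) (matExp_apply_pos hnonneg (hpos n₀ le_rfl i j))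
end

section
/- For every α ∈ (0,1], λ > 0 and s > 0, the Laplace transform of the Mittag-Leffler density equals λ/(λ + s^α): ∫_0^∞ e^{−sτ} · λ τ^{α−1} E_{α,α}(−λ τ^α) dτ = λ/(λ + s^α). -/
open MeasureTheory

/-- Two-parameter Mittag-Leffler function `E_{a,b}(z) = Σ_{m=0}^∞ z^m / Γ(a m + b)`. -/
noncomputable def mittagLeffler (a b z : ℝ) : ℝ :=
  ∑' m : ℕ, z ^ m / Real.Gamma (a * m + b)

open Set Filter Topology

lemma Real.integral_rpow_mul_sub_rpow {p q t : ℝ} (hp : 0 < p) (hq : 0 < q) (ht : 0 < t) :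
    ∫ x in (0 : ℝ)..t, x ^ (p - 1) * (t - x) ^ (q - 1) =
      t ^ (p + q - 1) * (Real.Gamma p * Real.Gamma q / Real.Gamma (p + q)) := by
  have h := Complex.betaIntegral_scaled p q ht
  rw [Complex.betaIntegral_eq_Gamma_mul_div _ _ (by simpa) (by simpa)] at h
  have h1 : ∫ x in (0 : ℝ)..t, (x : ℂ) ^ ((p : ℂ) - 1) * ((t : ℂ) - x) ^ ((q : ℂ) - 1) =
      ∫ x in (0 : ℝ)..t, ((x ^ (p - 1) * (t - x) ^ (q - 1) : ℝ) : ℂ) := by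
    refine intervalIntegral.integral_congr fun x hx ↦ ?_
    rw [uIcc_of_le ht.le] at hx
    simp only [Complex.ofReal_mul]
    rw [Complex.ofReal_cpow hx.1, Complex.ofReal_cpow (sub_nonneg.2 hx.2)]
    push_cast
    rfl
  rw [h1, intervalIntegral.integral_ofReal, ← Complex.ofReal_add, Complex.Gamma_ofReal,
    Complex.Gamma_ofReal, Complex.Gamma_ofReal, ← Complex.ofReal_one, ← Complex.ofReal_sub,
    ← Complex.ofReal_cpow ht.le] at h
  exact_mod_cast h

lemma Real.intervalIntegrable_rpow_mul_sub_rpow {p q t : ℝ} (hp : 0 < p) (hq : 0 < q)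
    (ht : 0 < t) :
    IntervalIntegrable (fun x : ℝ ↦ x ^ (p - 1) * (t - x) ^ (q - 1)) volume 0 t := by
  by_contra h
  have h1 := Real.integral_rpow_mul_sub_rpow hp hq ht
  rw [intervalIntegral.integral_undef h] at h1
  have := Real.Gamma_pos_of_pos hp
  have := Real.Gamma_pos_of_pos hq
  have := Real.Gamma_pos_of_pos (add_pos hp hq)
  have : 0 < t ^ (p + q - 1) * (Real.Gamma p * Real.Gamma q / Real.Gamma (p + q)) := by
    positivity
  exact this.ne h1

lemma Real.exp_neg_mul_rpow_le_Gamma {A x : ℝ} (hA : 0 < A) (hx : 1 ≤ x) :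
    Real.exp (-A) * A ^ (x - 1) ≤ Real.Gamma x := by
  have hi := Real.GammaIntegral_convergent (zero_lt_one.trans_le hx)
  have hexp : IntegrableOn (fun t : ℝ ↦ Real.exp (-t)) (Ioi A) := integrableOn_exp_neg_Ioi A
  rw [Real.Gamma_eq_integral (zero_lt_one.trans_le hx)]
  calc Real.exp (-A) * A ^ (x - 1) = ∫ t in Ioi A, Real.exp (-t) * A ^ (x - 1) := by
        rw [integral_mul_const, integral_exp_neg_Ioi]
    _ ≤ ∫ t in Ioi A, Real.exp (-t) * t ^ (x - 1) := by
        refine setIntegral_mono_on (hexp.mul_const _) (hi.mono_set (Ioi_subset_Ioi hA.le))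
          measurableSet_Ioi fun t ht ↦ ?_
        gcongr
        exact le_of_lt ht
    _ ≤ _ := by
        refine setIntegral_mono_set hi ?_ (Ioi_subset_Ioi hA.le).eventuallyLE
        filter_upwards [ae_restrict_mem measurableSet_Ioi] with t ht
        have : (0 : ℝ) < t := ht
        simp only [Pi.zero_apply]
        positivity

lemma summable_pow_div_Gamma {a : ℝ} (ha : 0 < a) (b z : ℝ) :
    Summable fun m : ℕ ↦ z ^ m / Real.Gamma (a * m + b) := by
  set A : ℝ := (2 * (|z| + 1)) ^ a⁻¹ with hAdef
  have hA : 0 < A := by positivity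
  have hAa : A ^ a = 2 * (|z| + 1) := by
    rw [hAdef, ← Real.rpow_mul (by positivity), inv_mul_cancel₀ ha.ne', Real.rpow_one]
  have hg : Summable fun m : ℕ ↦ (Real.exp A * A ^ (1 - b)) * (1 / 2 : ℝ) ^ m :=
    (summable_geometric_of_lt_one (by norm_num) (by norm_num)).mul_left _
  refine hg.of_norm_bounded_eventually_nat ?_
  have hlim : Tendsto (fun m : ℕ ↦ a * (m : ℝ) + b) atTop atTop :=
    tendsto_atTop_add_const_right _ _ (tendsto_natCast_atTop_atTop.const_mul_atTop ha)
  filter_upwards [hlim.eventually_ge_atTop 1] with m hm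
  have hG := Real.exp_neg_mul_rpow_le_Gamma hA hm
  have hpos : 0 < Real.exp (-A) * A ^ (a * m + b - 1) := by positivity
  rw [norm_div, norm_pow, Real.norm_eq_abs, Real.norm_of_nonneg (hpos.le.trans hG)]
  have hsplit : A ^ (a * m + b - 1) = (2 * (|z| + 1)) ^ m * (A ^ (1 - b))⁻¹ := by
    rw [← Real.rpow_neg hA.le, ← hAa, ← Real.rpow_natCast, ← Real.rpow_mul hA.le,
      ← Real.rpow_add hA]
    congr 1
    ring
  calc |z| ^ m / Real.Gamma (a * m + b)
      ≤ (|z| + 1) ^ m / (Real.exp (-A) * A ^ (a * m + b - 1)) := by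
        gcongr
        linarith
    _ = _ := by
        rw [hsplit, mul_pow, Real.exp_neg, one_div, inv_pow]
        field_simp

lemma continuous_mittagLeffler {a b : ℝ} (ha : 0 < a) (hb : 0 < b) :
    Continuous (mittagLeffler a b) := by
  refine continuous_iff_continuousAt.2 fun z ↦ ?_
  have hc : ContinuousOn (mittagLeffler a b) (Icc (-(|z| + 1)) (|z| + 1)) := by
    refine continuousOn_tsum (fun m ↦ by fun_prop) (summable_pow_div_Gamma ha b (|z| + 1))
      fun m w hw ↦ ?_
    have hG : 0 < Real.Gamma (a * m + b) := Real.Gamma_pos_of_pos (by positivity)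
    rw [norm_div, norm_pow, Real.norm_of_nonneg hG.le]
    gcongr
    exact abs_le.2 hw
  exact hc.continuousAt (Icc_mem_nhds (by linarith [neg_abs_le z]) (by linarith [le_abs_self z]))

lemma mittagLeffler_eq_add {a : ℝ} (ha : 0 < a) (b z : ℝ) :
    mittagLeffler a b z = 1 / Real.Gamma b + z * mittagLeffler a (b + a) z := by
  rw [mittagLeffler, (summable_pow_div_Gamma ha b z).tsum_eq_zero_add, mittagLeffler,
    ← tsum_mul_left]
  congr 1
  · simp
  · refine tsum_congr fun m ↦ ?_
    rw [pow_succ', mul_div_assoc]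
    congr 3
    push_cast
    ring

/-- The Mittag-Leffler kernel `t ^ (b - 1) * E_{a,b}(-l t ^ a)`. -/
noncomputable def mittagLefflerKernel (a b l t : ℝ) : ℝ :=
  t ^ (b - 1) * mittagLeffler a b (-(l * t ^ a))

lemma mittagLefflerKernel_eq_sub {a b l t : ℝ} (ha : 0 < a) (ht : 0 < t) :
    mittagLefflerKernel a b l t =
      t ^ (b - 1) / Real.Gamma b - l * mittagLefflerKernel a (b + a) l t := by
  rw [mittagLefflerKernel, mittagLefflerKernel, mittagLeffler_eq_add ha b,
    show b + a - 1 = b - 1 + a by ring, Real.rpow_add ht]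
  ring

lemma hasSum_mittagLefflerKernel {a b l t : ℝ} (ha : 0 < a) (ht : 0 < t) :
    HasSum (fun m : ℕ ↦ (-l) ^ m / Real.Gamma (a * m + b) * t ^ (a * m + b - 1))
      (mittagLefflerKernel a b l t) := by
  refine ((summable_pow_div_Gamma ha b (-(l * t ^ a))).hasSum.mul_left (t ^ (b - 1))).congr_fun ?_
  intro m
  rw [show a * m + b - 1 = b - 1 + a * m by ring, Real.rpow_add ht, Real.rpow_mul ht.le,
    Real.rpow_natCast, ← neg_mul, mul_pow]
  ring

/-- Fractional integration of order `a` maps the kernel of index `b` to that of index `b + a`. -/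
lemma integral_mittagLefflerKernel_mul_sub_rpow {a b l t : ℝ} (ha : 0 < a) (hb : 0 < b)
    (ht : 0 < t) :
    ∫ x in (0 : ℝ)..t, mittagLefflerKernel a b l x * ((t - x) ^ (a - 1) / Real.Gamma a) =
      mittagLefflerKernel a (b + a) l t := by
  have hΓ := Real.Gamma_pos_of_pos ha
  have hp (m : ℕ) : 0 < a * m + b := by positivity
  have hΓm (m : ℕ) : 0 < Real.Gamma (a * m + b) := Real.Gamma_pos_of_pos (hp m)
  let c : ℝ → ℕ → ℝ := fun l m ↦ l ^ m / Real.Gamma (a * m + b) / Real.Gamma a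
  let F : ℕ → ℝ → ℝ := fun m x ↦ c (-l) m * (x ^ (a * m + b - 1) * (t - x) ^ (a - 1))
  have hval (l : ℝ) (m : ℕ) :
      ∫ x in (0 : ℝ)..t, c l m * (x ^ (a * m + b - 1) * (t - x) ^ (a - 1)) =
      l ^ m / Real.Gamma (a * m + (b + a)) * t ^ (a * m + (b + a) - 1) := by
    rw [intervalIntegral.integral_const_mul, Real.integral_rpow_mul_sub_rpow (hp m) ha ht,
      add_assoc]
    have := hΓm m
    simp only [c]
    field_simp
  have hint (m : ℕ) : IntegrableOn (F m) (Ioc 0 t) :=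
    ((intervalIntegrable_iff_integrableOn_Ioc_of_le ht.le).1
      (Real.intervalIntegrable_rpow_mul_sub_rpow (hp m) ha ht)).const_mul _
  have hnorm (m : ℕ) : ∫ x in Ioc 0 t, ‖F m x‖ =
      |l| ^ m / Real.Gamma (a * m + (b + a)) * t ^ (a * m + (b + a) - 1) := by
    rw [← hval |l| m, intervalIntegral.integral_of_le ht.le]
    refine setIntegral_congr_fun measurableSet_Ioc fun x hx ↦ ?_
    have h1 : 0 ≤ x ^ (a * m + b - 1) * (t - x) ^ (a - 1) :=
      mul_nonneg (Real.rpow_nonneg hx.1.le _) (Real.rpow_nonneg (sub_nonneg.2 hx.2) _)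
    simp only [F, c]
    rw [norm_mul, Real.norm_of_nonneg h1, norm_div, norm_div, norm_pow, norm_neg,
      Real.norm_of_nonneg (hΓm m).le, Real.norm_of_nonneg hΓ.le, Real.norm_eq_abs]
  have hsum : Summable fun m ↦ ∫ x in Ioc 0 t, ‖F m x‖ := by
    simp_rw [hnorm]
    simpa using (hasSum_mittagLefflerKernel (l := -|l|) ha ht).summable
  have key := hasSum_integral_of_summable_integral_norm hint hsum
  have hF (m : ℕ) : ∫ x in Ioc 0 t, F m x =
      (-l) ^ m / Real.Gamma (a * m + (b + a)) * t ^ (a * m + (b + a) - 1) := by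
    rw [← hval, intervalIntegral.integral_of_le ht.le]
  simp_rw [hF] at key
  rw [(hasSum_mittagLefflerKernel ha ht).unique key,
    intervalIntegral.integral_of_le ht.le]
  refine setIntegral_congr_fun measurableSet_Ioc fun x hx ↦ ?_
  refine (((hasSum_mittagLefflerKernel ha hx.1).mul_right
    ((t - x) ^ (a - 1) / Real.Gamma a)).congr_fun fun m ↦ ?_).tsum_eq.symm
  simp only [F, c]
  ring

/-- Exponential kernels on the half-line are of positive type. -/
lemma integral_mul_integral_exp_nonneg {c T : ℝ} (hc : 0 ≤ c) (hT : 0 ≤ T) {U : ℝ → ℝ}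
    (hU : Continuous U) :
    0 ≤ ∫ t in (0 : ℝ)..T, U t * ∫ x in (0 : ℝ)..t, U x * Real.exp (-(c * (t - x))) := by
  set V : ℝ → ℝ := fun t ↦ ∫ x in (0 : ℝ)..t, U x * Real.exp (c * x) with hV
  have hf : Continuous fun x ↦ U x * Real.exp (c * x) := by fun_prop
  have hVd (t : ℝ) : HasDerivAt V (U t * Real.exp (c * t)) t :=
    (hf.integral_hasStrictDerivAt 0 t).hasDerivAt
  have hVc : Continuous V := continuous_iff_continuousAt.2 fun t ↦ (hVd t).continuousAt
  have hconv (t : ℝ) : ∫ x in (0 : ℝ)..t, U x * Real.exp (-(c * (t - x))) =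
      Real.exp (-(c * t)) * V t := by
    rw [hV, ← intervalIntegral.integral_const_mul]
    refine intervalIntegral.integral_congr fun x _ ↦ ?_
    rw [show -(c * (t - x)) = -(c * t) + c * x by ring, Real.exp_add]
    ring
  have hWd (t : ℝ) : HasDerivAt (fun t ↦ (Real.exp (-(c * t)) * V t) ^ 2 / 2)
      (U t * (Real.exp (-(c * t)) * V t) - c * (Real.exp (-(c * t)) * V t) ^ 2) t := by
    have he : HasDerivAt (fun t : ℝ ↦ Real.exp (-(c * t))) (Real.exp (-(c * t)) * -(c * 1)) t :=
      ((hasDerivAt_id t).const_mul c).neg.exp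
    refine (((he.mul (hVd t)).pow 2).div_const 2).congr_deriv ?_
    have h1 : Real.exp (-(c * t)) * Real.exp (c * t) = 1 := by
      rw [← Real.exp_add]; simp
    simp only [Pi.mul_apply]
    push_cast
    linear_combination (Real.exp (-(c * t)) * V t * U t) * h1
  have hFTC := intervalIntegral.integral_eq_sub_of_hasDerivAt (a := 0) (b := T)
    (fun t _ ↦ hWd t) (Continuous.intervalIntegrable (by fun_prop) _ _)
  rw [intervalIntegral.integral_sub (Continuous.intervalIntegrable (by fun_prop) _ _)
    (Continuous.intervalIntegrable (by fun_prop) _ _)] at hFTC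
  have hV0 : V 0 = 0 := by simp [hV]
  have hsq : 0 ≤ ∫ t in (0 : ℝ)..T, c * (Real.exp (-(c * t)) * V t) ^ 2 :=
    intervalIntegral.integral_nonneg hT fun t _ ↦ by positivity
  have hend : 0 ≤ (Real.exp (-(c * T)) * V T) ^ 2 / 2 := by positivity
  simp_rw [hconv]
  simp only [hV0, mul_zero] at hFTC
  linarith

lemma integrable_mul_indicator_sub {T : ℝ} {U k : ℝ → ℝ} (hU : Continuous U)
    (hk : IntegrableOn k (Ioi 0)) :
    Integrable (fun z : ℝ × ℝ ↦ (Ioc 0 T).indicator U z.1 *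
      ((Ioc 0 T).indicator U z.2 * (Ioi 0).indicator k (z.1 - z.2))) (volume.prod volume) := by
  have hu : Integrable ((Ioc 0 T).indicator U) :=
    ((hU.integrableOn_Icc (a := 0) (b := T)).mono_set Ioc_subset_Icc_self).integrable_indicator
      measurableSet_Ioc
  have h := hu.convolution_integrand (ContinuousLinearMap.mul ℝ ℝ)
    (hk.integrable_indicator measurableSet_Ioi)
  obtain ⟨C, hC⟩ := (isCompact_Icc (a := (0 : ℝ)) (b := T)).exists_bound_of_continuousOn
    hU.continuousOn
  refine h.bdd_mul (c := max C 0) ?_ (ae_of_all _ fun z ↦ ?_)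
  · exact ((hU.measurable.indicator measurableSet_Ioc).comp measurable_fst).aestronglyMeasurable
  · by_cases hz : z.1 ∈ Ioc 0 T
    · rw [indicator_of_mem hz]
      exact (hC _ (Ioc_subset_Icc_self hz)).trans (le_max_left _ _)
    · rw [indicator_of_notMem hz]
      simp

lemma integral_mul_indicator_sub {T : ℝ} (hT : 0 ≤ T) {U k : ℝ → ℝ} (hU : Continuous U)
    (hk : IntegrableOn k (Ioi 0)) :
    ∫ z : ℝ × ℝ, (Ioc 0 T).indicator U z.1 *
      ((Ioc 0 T).indicator U z.2 * (Ioi 0).indicator k (z.1 - z.2)) ∂(volume.prod volume) =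
    ∫ t in (0 : ℝ)..T, U t * ∫ x in (0 : ℝ)..t, U x * k (t - x) := by
  rw [integral_prod _ (integrable_mul_indicator_sub hU hk), intervalIntegral.integral_of_le hT,
    ← integral_indicator measurableSet_Ioc]
  congr 1 with t
  simp only
  rw [integral_const_mul]
  by_cases ht : t ∈ Ioc 0 T
  · rw [indicator_of_mem ht, indicator_of_mem ht, intervalIntegral.integral_of_le ht.1.le,
      integral_Ioc_eq_integral_Ioo, ← integral_indicator measurableSet_Ioo]
    congr 2 with x
    by_cases hx : x ∈ Ioo 0 t
    · rw [indicator_of_mem hx, indicator_of_mem (by exact ⟨hx.1, hx.2.le.trans ht.2⟩),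
        indicator_of_mem (by exact sub_pos.2 hx.2)]
    · rw [indicator_of_notMem hx]
      by_cases hx0 : 0 < x
      · rw [indicator_of_notMem (s := Ioi 0) (by simpa using not_lt.1 fun h ↦ hx ⟨hx0, h⟩),
          mul_zero]
      · rw [indicator_of_notMem (fun h ↦ hx0 h.1), zero_mul]
  · rw [indicator_of_notMem ht, indicator_of_notMem ht, zero_mul]

lemma integrableOn_rpow_mul_exp_neg {s c : ℝ} (hs : -1 < s) (hc : 0 < c) :
    IntegrableOn (fun t : ℝ ↦ t ^ s * Real.exp (-(c * t))) (Ioi 0) := by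
  simpa using integrableOn_rpow_mul_exp_neg_mul_rpow hs one_pos hc

/-- The tempered fractional integration kernel is of positive type. -/
lemma integral_mul_integral_rpow_mul_exp_nonneg {a ε T : ℝ} (ha : a ∈ Ioc (0 : ℝ) 1)
    (hε : 0 < ε) (hT : 0 ≤ T) {U : ℝ → ℝ} (hU : Continuous U) :
    0 ≤ ∫ t in (0 : ℝ)..T, U t *
      ∫ x in (0 : ℝ)..t, U x * ((t - x) ^ (a - 1) * Real.exp (-(ε * (t - x)))) := by
  rcases ha.2.eq_or_lt with rfl | ha1
  · simpa using integral_mul_integral_exp_nonneg hε.le hT hU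
  have hk := integrableOn_rpow_mul_exp_neg (s := a - 1) (by linarith [ha.1]) hε
  have hΓ : 0 < Real.Gamma (1 - a) := Real.Gamma_pos_of_pos (by linarith)
  have he {r : ℝ} (hr : 0 < r) : IntegrableOn (fun y : ℝ ↦ Real.exp (-((r + ε) * y))) (Ioi 0) := by
    simpa using integrableOn_rpow_mul_exp_neg (s := 0) (by norm_num) (add_pos hr hε)
  rw [← integral_mul_indicator_sub hT hU hk]
  set u := (Ioc 0 T).indicator U with hu
  let Φ : ℝ × ℝ → ℝ → ℝ := fun z r ↦ u z.1 * (u z.2 *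
    (Ioi 0).indicator (fun y ↦ Real.exp (-((r + ε) * y))) (z.1 - z.2)) * r ^ (-a)
  have hum : Measurable u := hU.measurable.indicator measurableSet_Ioc
  have hfactor (z : ℝ × ℝ) (hz : 0 < z.1 - z.2) (r : ℝ) : Φ z r =
      u z.1 * u z.2 * Real.exp (-(ε * (z.1 - z.2))) *
        (r ^ ((1 - a) - 1) * Real.exp (-((z.1 - z.2) * r))) := by
    simp only [Φ]
    rw [indicator_of_mem (by exact hz), show 1 - a - 1 = -a by ring,
      show -((r + ε) * (z.1 - z.2)) = -(ε * (z.1 - z.2)) + -((z.1 - z.2) * r) by ring,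
      Real.exp_add]
    ring
  have hfactor0 (z : ℝ × ℝ) (hz : ¬ 0 < z.1 - z.2) (r : ℝ) : Φ z r = 0 := by
    simp only [Φ]
    rw [indicator_of_notMem (by exact hz)]
    ring
  have hGamma {y : ℝ} (hy : 0 < y) :
      ∫ r in Ioi (0 : ℝ), r ^ ((1 - a) - 1) * Real.exp (-(y * r)) =
        y ^ (a - 1) * Real.Gamma (1 - a) := by
    rw [Real.integral_rpow_mul_exp_neg_mul_Ioi (by linarith) hy, one_div,
      Real.inv_rpow hy.le, ← Real.rpow_neg hy.le, neg_sub]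
  have hΦint (z : ℝ × ℝ) : IntegrableOn (Φ z) (Ioi 0) := by
    by_cases hz : 0 < z.1 - z.2
    · rw [show Φ z = _ from funext (hfactor z hz)]
      exact (integrableOn_rpow_mul_exp_neg (by linarith) hz).const_mul _
    · rw [show Φ z = _ from funext (hfactor0 z hz)]
      exact integrableOn_zero
  have hΦval (z : ℝ × ℝ) : ∫ r in Ioi (0 : ℝ), Φ z r = Real.Gamma (1 - a) * (u z.1 * (u z.2 *
      (Ioi 0).indicator (fun t ↦ t ^ (a - 1) * Real.exp (-(ε * t))) (z.1 - z.2))) := by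
    by_cases hz : 0 < z.1 - z.2
    · simp_rw [hfactor z hz]
      rw [integral_const_mul, hGamma hz, indicator_of_mem (by exact hz)]
      ring
    · simp_rw [hfactor0 z hz]
      rw [indicator_of_notMem (by exact hz)]
      simp
  have hΦnorm (z : ℝ × ℝ) : ∫ r in Ioi (0 : ℝ), ‖Φ z r‖ = ‖∫ r in Ioi (0 : ℝ), Φ z r‖ := by
    by_cases hz : 0 < z.1 - z.2
    · simp_rw [hfactor z hz]
      rw [integral_const_mul, norm_mul, hGamma hz, Real.norm_of_nonneg (r := _ * Real.Gamma _)
        (by positivity), ← hGamma hz, ← integral_const_mul]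
      refine setIntegral_congr_fun measurableSet_Ioi fun r hr ↦ ?_
      have hr' : 0 < r := hr
      rw [norm_mul, Real.norm_of_nonneg (r := _ * Real.exp (-((z.1 - z.2) * r))) (by positivity)]
    · simp [hfactor0 z hz]
  have hΦm : Measurable (Function.uncurry Φ) := by
    have : Function.uncurry Φ = fun w : (ℝ × ℝ) × ℝ ↦ u w.1.1 * (u w.1.2 *
        {w : (ℝ × ℝ) × ℝ | 0 < w.1.1 - w.1.2}.indicator
          (fun w ↦ Real.exp (-((w.2 + ε) * (w.1.1 - w.1.2)))) w) * w.2 ^ (-a) := by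
      ext w
      simp [Function.uncurry, Φ, indicator]
    rw [this]
    have hS : MeasurableSet {w : (ℝ × ℝ) × ℝ | 0 < w.1.1 - w.1.2} :=
      measurableSet_lt measurable_const (by fun_prop)
    have hexp : Measurable fun w : (ℝ × ℝ) × ℝ ↦ Real.exp (-((w.2 + ε) * (w.1.1 - w.1.2))) := by
      fun_prop
    have := hexp.indicator hS
    fun_prop
  have hΦ : Integrable (Function.uncurry Φ)
      ((volume.prod volume).prod (volume.restrict (Ioi 0))) := by
    rw [integrable_prod_iff hΦm.aestronglyMeasurable]
    refine ⟨ae_of_all _ hΦint, ?_⟩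
    simp only [Function.uncurry_apply_pair, hΦnorm, hΦval]
    exact ((integrable_mul_indicator_sub hU hk).const_mul _).norm
  have hswap := integral_integral_swap hΦ
  simp_rw [hΦval] at hswap
  rw [integral_const_mul] at hswap
  have hpos : 0 ≤ ∫ r in Ioi (0 : ℝ), ∫ z, Φ z r ∂(volume.prod volume) := by
    refine setIntegral_nonneg measurableSet_Ioi fun r hr ↦ ?_
    simp only [Φ]
    rw [integral_mul_const, integral_mul_indicator_sub hT hU (he hr)]
    exact mul_nonneg (integral_mul_integral_exp_nonneg (add_pos hr hε).le hT hU)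
      (Real.rpow_nonneg (le_of_lt hr) _)
  rw [← hswap] at hpos
  exact nonneg_of_mul_nonneg_right hpos hΓ

lemma continuous_mittagLefflerKernel {a b l : ℝ} (ha : 0 < a) (hb : 1 ≤ b) :
    Continuous (mittagLefflerKernel a b l) := by
  have h1 : Continuous fun t : ℝ ↦ t ^ (b - 1) := Real.continuous_rpow_const (by linarith)
  have h2 : Continuous fun t : ℝ ↦ t ^ a := Real.continuous_rpow_const ha.le
  exact h1.mul ((continuous_mittagLeffler ha (by linarith)).comp (h2.const_mul l).neg)

/-- The Volterra equation solved by the exponentially damped Mittag-Leffler kernel. -/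
lemma exp_mul_mittagLefflerKernel_add {a b l ε t : ℝ} (ha : 0 < a) (hb : 0 < b) (ht : 0 < t) :
    Real.exp (-(ε * t)) * mittagLefflerKernel a b l t +
      l / Real.Gamma a * ∫ x in (0 : ℝ)..t, Real.exp (-(ε * x)) * mittagLefflerKernel a b l x *
        ((t - x) ^ (a - 1) * Real.exp (-(ε * (t - x)))) =
    Real.exp (-(ε * t)) * (t ^ (b - 1) / Real.Gamma b) := by
  have hconv : ∫ x in (0 : ℝ)..t, Real.exp (-(ε * x)) * mittagLefflerKernel a b l x *
        ((t - x) ^ (a - 1) * Real.exp (-(ε * (t - x)))) =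
      Real.exp (-(ε * t)) * Real.Gamma a * mittagLefflerKernel a (b + a) l t := by
    rw [← integral_mittagLefflerKernel_mul_sub_rpow ha hb ht,
      ← intervalIntegral.integral_const_mul]
    refine intervalIntegral.integral_congr fun x _ ↦ ?_
    have hΓ := Real.Gamma_pos_of_pos ha
    have hexp : Real.exp (-(ε * t)) = Real.exp (-(ε * x)) * Real.exp (-(ε * (t - x))) := by
      rw [← Real.exp_add]
      ring_nf
    simp only [hexp]
    field_simp
  have hΓ := Real.Gamma_pos_of_pos ha
  rw [hconv, mittagLefflerKernel_eq_sub ha ht]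
  field_simp
  ring

lemma integral_sq_exp_mul_mittagLefflerKernel_le {a b l ε T : ℝ} (ha : a ∈ Ioc (0 : ℝ) 1)
    (hb : 1 ≤ b) (hl : 0 ≤ l) (hε : 0 < ε) (hT : 0 ≤ T) :
    ∫ t in (0 : ℝ)..T, (Real.exp (-(ε * t)) * mittagLefflerKernel a b l t) ^ 2 ≤
      ∫ t in (0 : ℝ)..T, (Real.exp (-(ε * t)) * (t ^ (b - 1) / Real.Gamma b)) ^ 2 := by
  set G : ℝ → ℝ := fun t ↦ Real.exp (-(ε * t)) * mittagLefflerKernel a b l t with hG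
  set P : ℝ → ℝ := fun t ↦ Real.exp (-(ε * t)) * (t ^ (b - 1) / Real.Gamma b) with hP
  have hΓ := Real.Gamma_pos_of_pos ha.1
  have hGc : Continuous G := by
    have := continuous_mittagLefflerKernel (l := l) ha.1 hb
    fun_prop
  have hPc : Continuous P := by
    have : Continuous fun t : ℝ ↦ t ^ (b - 1) := Real.continuous_rpow_const (by linarith)
    fun_prop
  have hpos := mul_nonneg (div_nonneg hl hΓ.le)
    (integral_mul_integral_rpow_mul_exp_nonneg ha hε hT hGc)
  have hEq : l / Real.Gamma a * ∫ t in (0 : ℝ)..T, G t *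
      ∫ x in (0 : ℝ)..t, G x * ((t - x) ^ (a - 1) * Real.exp (-(ε * (t - x)))) =
      ∫ t in (0 : ℝ)..T, (G t * P t - G t ^ 2) := by
    rw [← intervalIntegral.integral_const_mul, intervalIntegral.integral_of_le hT,
      intervalIntegral.integral_of_le hT]
    refine setIntegral_congr_fun measurableSet_Ioc fun t ht ↦ ?_
    have := exp_mul_mittagLefflerKernel_add (l := l) (ε := ε) ha.1 (zero_lt_one.trans_le hb) ht.1
    simp only [hG, hP]
    rw [← this]
    ring
  rw [hEq] at hpos
  have hle : ∫ t in (0 : ℝ)..T, (G t * P t - G t ^ 2) ≤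
      ∫ t in (0 : ℝ)..T, (P t ^ 2 - G t ^ 2) / 2 :=
    intervalIntegral.integral_mono_on hT (Continuous.intervalIntegrable (by fun_prop) _ _)
      (Continuous.intervalIntegrable (by fun_prop) _ _)
      fun t _ ↦ by nlinarith [sq_nonneg (G t - P t)]
  replace hle := hpos.trans hle
  rw [intervalIntegral.integral_div, intervalIntegral.integral_sub
    (Continuous.intervalIntegrable (by fun_prop) _ _)
    (Continuous.intervalIntegrable (by fun_prop) _ _)] at hle
  change ∫ t in (0 : ℝ)..T, G t ^ 2 ≤ ∫ t in (0 : ℝ)..T, P t ^ 2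
  linarith

lemma integrableOn_exp_mul_mittagLefflerKernel_of_one_le {a b l s : ℝ} (ha : a ∈ Ioc (0 : ℝ) 1)
    (hb : 1 ≤ b) (hl : 0 ≤ l) (hs : 0 < s) :
    IntegrableOn (fun t ↦ Real.exp (-(s * t)) * mittagLefflerKernel a b l t) (Ioi 0) := by
  have hkc := continuous_mittagLefflerKernel (l := l) ha.1 hb
  have hP : IntegrableOn
      (fun t : ℝ ↦ (Real.exp (-(s / 2 * t)) * (t ^ (b - 1) / Real.Gamma b)) ^ 2) (Ioi 0) := by
    refine IntegrableOn.congr_fun ((integrableOn_rpow_mul_exp_neg (s := 2 * (b - 1))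
      (by linarith) hs).div_const (Real.Gamma b ^ 2)) (fun t ht ↦ ?_) measurableSet_Ioi
    have ht' : (0 : ℝ) < t := ht
    have h1 : t ^ (2 * (b - 1)) = (t ^ (b - 1)) ^ 2 := by
      rw [mul_comm, Real.rpow_mul ht'.le, Real.rpow_ofNat]
    have h2 : Real.exp (-(s * t)) = Real.exp (-(s / 2 * t)) ^ 2 := by
      rw [← Real.exp_nat_mul]
      congr 1
      push_cast
      ring
    simp only [h1, h2]
    ring
  have hG : IntegrableOn
      (fun t ↦ (Real.exp (-(s / 2 * t)) * mittagLefflerKernel a b l t) ^ 2) (Ioi 0) := by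
    refine integrableOn_Ioi_of_intervalIntegral_norm_bounded
      (∫ t in Ioi (0 : ℝ), (Real.exp (-(s / 2 * t)) * (t ^ (b - 1) / Real.Gamma b)) ^ 2) 0
      (fun T ↦ (Continuous.integrableOn_Icc (by fun_prop)).mono_set Ioc_subset_Icc_self)
      tendsto_id ?_
    filter_upwards [eventually_ge_atTop 0] with T hT
    simp only [norm_pow, Real.norm_eq_abs, sq_abs, id_eq]
    refine (integral_sq_exp_mul_mittagLefflerKernel_le ha hb hl (half_pos hs) hT).trans ?_
    rw [intervalIntegral.integral_of_le hT]
    exact setIntegral_mono_set hP (ae_of_all _ fun t ↦ sq_nonneg _)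
      Ioc_subset_Ioi_self.eventuallyLE
  have he : IntegrableOn (fun t : ℝ ↦ Real.exp (-(s * t))) (Ioi 0) := by
    simpa using integrableOn_rpow_mul_exp_neg (s := 0) (by norm_num) hs
  refine (hG.add he).mono' (by fun_prop) (ae_of_all _ fun t ↦ ?_)
  have h2 : Real.exp (-(s * t)) = Real.exp (-(s / 2 * t)) * Real.exp (-(s / 2 * t)) := by
    rw [← Real.exp_add]
    congr 1
    ring
  simp only [Pi.add_apply, Real.norm_eq_abs, h2]
  rw [abs_le]
  constructor
  · nlinarith [sq_nonneg (Real.exp (-(s / 2 * t)) + Real.exp (-(s / 2 * t)) *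
      mittagLefflerKernel a b l t), sq_nonneg (Real.exp (-(s / 2 * t)) *
      mittagLefflerKernel a b l t), sq_nonneg (Real.exp (-(s / 2 * t)))]
  · nlinarith [sq_nonneg (Real.exp (-(s / 2 * t)) - Real.exp (-(s / 2 * t)) *
      mittagLefflerKernel a b l t), sq_nonneg (Real.exp (-(s / 2 * t)) *
      mittagLefflerKernel a b l t), sq_nonneg (Real.exp (-(s / 2 * t)))]

lemma integrableOn_exp_mul_mittagLefflerKernel {a b l s : ℝ} (ha : a ∈ Ioc (0 : ℝ) 1)
    (hb : 0 < b) (hl : 0 ≤ l) (hs : 0 < s) :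
    IntegrableOn (fun t ↦ Real.exp (-(s * t)) * mittagLefflerKernel a b l t) (Ioi 0) := by
  obtain ⟨n, hn⟩ := exists_nat_ge (1 / a)
  have hn' : 1 ≤ b + n * a := by
    rw [div_le_iff₀ ha.1] at hn
    linarith
  clear hn
  induction n generalizing b with
  | zero => exact integrableOn_exp_mul_mittagLefflerKernel_of_one_le ha (by simpa using hn') hl hs
  | succ n ih =>
    have hnext := ih (b := b + a) (by linarith [ha.1]) (by push_cast at hn'; linarith)
    refine IntegrableOn.congr_fun (((integrableOn_rpow_mul_exp_neg (s := b - 1) (by linarith)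
      hs).div_const (Real.Gamma b)).sub (hnext.const_mul l)) (fun t ht ↦ ?_) measurableSet_Ioi
    rw [mittagLefflerKernel_eq_sub ha.1 ht]
    simp only [Pi.sub_apply]
    ring

lemma integral_rpow_mul_exp_neg {b s : ℝ} (hb : 0 < b) (hs : 0 < s) :
    ∫ t in Ioi (0 : ℝ), t ^ (b - 1) * Real.exp (-(s * t)) = s ^ (-b) * Real.Gamma b := by
  rw [Real.integral_rpow_mul_exp_neg_mul_Ioi hb hs, one_div, Real.inv_rpow hs.le,
    Real.rpow_neg hs.le]

lemma integral_exp_mul_mittagLefflerKernel {a b l s : ℝ} (ha : a ∈ Ioc (0 : ℝ) 1)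
    (hb : 0 < b) (hl : 0 ≤ l) (hs : 0 < s) :
    ∫ t in Ioi (0 : ℝ), Real.exp (-(s * t)) * mittagLefflerKernel a b l t =
      s ^ (a - b) / (l + s ^ a) := by
  have hh := integrableOn_exp_mul_mittagLefflerKernel ha hb hl hs
  have hk := integrableOn_rpow_mul_exp_neg (s := a - 1) (by linarith [ha.1]) hs
  have hΓa := Real.Gamma_pos_of_pos ha.1
  have hΓb := Real.Gamma_pos_of_pos hb
  have hsa : 0 < s ^ a := Real.rpow_pos_of_pos hs a
  have hconv := integral_posConvolution hh hk (ContinuousLinearMap.mul ℝ ℝ)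
  have hconv_int := (integrable_posConvolution hh hk (ContinuousLinearMap.mul ℝ ℝ)).integrableOn
    (s := Ioi 0)
  simp only [ContinuousLinearMap.mul_apply', integral_rpow_mul_exp_neg ha.1 hs] at hconv
  have hEq : ∫ t in Ioi (0 : ℝ), (Real.exp (-(s * t)) * mittagLefflerKernel a b l t +
      l / Real.Gamma a * ∫ x in (0 : ℝ)..t, Real.exp (-(s * x)) * mittagLefflerKernel a b l x *
        ((t - x) ^ (a - 1) * Real.exp (-(s * (t - x))))) =
      ∫ t in Ioi (0 : ℝ), t ^ (b - 1) * Real.exp (-(s * t)) / Real.Gamma b := by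
    refine setIntegral_congr_fun measurableSet_Ioi fun t ht ↦ ?_
    rw [exp_mul_mittagLefflerKernel_add ha.1 hb ht]
    ring
  rw [integral_add hh, integral_const_mul, hconv, integral_div,
    integral_rpow_mul_exp_neg hb hs] at hEq
  · rw [Real.rpow_neg hs.le] at hEq
    rw [eq_div_iff (by positivity), sub_eq_add_neg, Real.rpow_add hs]
    field_simp at hEq
    linarith
  · refine IntegrableOn.congr_fun (hconv_int.const_mul (l / Real.Gamma a)) (fun t ht ↦ ?_)
      measurableSet_Ioi
    simp only [posConvolution, indicator_of_mem ht, ContinuousLinearMap.mul_apply']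

/-- For `α ∈ (0,1]`, `λ > 0`, `s > 0`, the Laplace transform of the Mittag-Leffler
density equals `λ/(λ + s^α)`:
`∫_0^∞ e^{−sτ} λ τ^{α−1} E_{α,α}(−λ τ^α) dτ = λ/(λ + s^α)`. -/
theorem mittagLeffler_density_laplace (α lam s : ℝ)
    (hα : α ∈ Set.Ioc (0 : ℝ) 1) (hlam : 0 < lam) (hs : 0 < s) :
    (∫ τ in Set.Ioi (0 : ℝ),
        Real.exp (-(s * τ)) * (lam * τ ^ (α - 1) * mittagLeffler α α (-(lam * τ ^ α))))
      = lam / (lam + s ^ α) := by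
  have h := integral_exp_mul_mittagLefflerKernel hα hα.1 hlam.le hs
  rw [sub_self, Real.rpow_zero] at h
  calc _ = ∫ τ in Ioi (0 : ℝ), lam * (Real.exp (-(s * τ)) * mittagLefflerKernel α α lam τ) := by
        refine integral_congr_ae (ae_of_all _ fun τ ↦ ?_)
        simp only [mittagLefflerKernel]
        ring
    _ = _ := by rw [integral_const_mul, h, mul_one_div]
end

section
/- Let α ∈ (0,1], 0 < λ < 1 and n ≥ 1 an integer. Then the series Σ_{m=0}^∞ (−λ)^m [ (α(m+1))_n − (αm)_n ] converges absolutely, and the n-th Taylor coefficient at u = 0 of the function u ↦ λ(1 − (1−u)^α)/(λ + (1−u)^α) equals (λ/n!) Σ_{m=0}^∞ (−λ)^m [ (α(m+1))_n − (αm)_n ]. -/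
open Polynomial

lemma ascPochhammer_eval_le_add_pow {x y : ℝ} (hx : 0 ≤ x) (hxy : x ≤ y) (k : ℕ) :
    (ascPochhammer ℝ k).eval x ≤ (y + k) ^ k := by
  induction k with
  | zero => simp
  | succ k ih =>
    have hy : 0 ≤ y := hx.trans hxy
    rw [ascPochhammer_succ_eval, pow_succ]
    push_cast
    have hpow : (y + k) ^ k ≤ (y + (k + 1)) ^ k := by gcongr; linarith
    exact mul_le_mul (ih.trans hpow) (by linarith) (by positivity) (by positivity)

lemma ascPochhammer_eval_nonneg {x : ℝ} (hx : 0 ≤ x) (k : ℕ) :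
    0 ≤ (ascPochhammer ℝ k).eval x := by
  induction k with
  | zero => simp
  | succ k ih =>
    rw [ascPochhammer_succ_eval]
    positivity

/-- The `k`-th derivative of `u ↦ (-lam) ^ m * (1 - u) ^ (-(α * m))`. -/
noncomputable def geometricTermDeriv (α lam : ℝ) (k m : ℕ) (u : ℝ) : ℝ :=
  (-lam) ^ m * (ascPochhammer ℝ k).eval (α * m) * (1 - u) ^ (-(α * m) - k)

lemma hasDerivAt_geometricTermDeriv (α lam : ℝ) (k m : ℕ) {u : ℝ} (hu : u < 1) :
    HasDerivAt (geometricTermDeriv α lam k m) (geometricTermDeriv α lam (k + 1) m u) u := by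
  have hsub : HasDerivAt (fun v : ℝ => 1 - v) (-1) u := by
    simpa using (hasDerivAt_id u).const_sub 1
  have hpow := (hsub.rpow_const (p := -(α * m) - k) (Or.inl (by linarith))).const_mul
    ((-lam) ^ m * (ascPochhammer ℝ k).eval (α * m))
  refine hpow.congr_deriv ?_
  have hexp : -(α * m) - ((k + 1 : ℕ) : ℝ) = -(α * m) - k - 1 := by push_cast; ring
  rw [geometricTermDeriv, ascPochhammer_succ_eval, hexp]
  ring

/-- A majorant of `geometricTermDeriv` on `u < (1 - lam) / 2`. -/
noncomputable def geometricTermBound (lam : ℝ) (k m : ℕ) : ℝ :=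
  (lam ^ k)⁻¹ * (((m + k : ℕ) : ℝ) ^ k * (lam / ((1 + lam) / 2)) ^ (m + k))

lemma summable_geometricTermBound {lam : ℝ} (h0 : 0 < lam) (h1 : lam < 1) (k : ℕ) :
    Summable (geometricTermBound lam k) := by
  have hq : ‖lam / ((1 + lam) / 2)‖ < 1 := by
    rw [Real.norm_of_nonneg (by positivity), div_lt_one (by positivity)]
    linarith
  have hsum := summable_pow_mul_geometric_of_norm_lt_one k hq
  have hshift := (summable_nat_add_iff k).2 hsum
  unfold geometricTermBound
  exact hshift.mul_left _

lemma norm_geometricTermDeriv_le {α lam : ℝ} (hα0 : 0 ≤ α) (hα1 : α ≤ 1) (h0 : 0 < lam)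
    (h1 : lam < 1) (k m : ℕ) {u : ℝ} (hu : u < (1 - lam) / 2) :
    ‖geometricTermDeriv α lam k m u‖ ≤ geometricTermBound lam k m := by
  have hc : 0 < (1 + lam) / 2 := by linarith
  have hαm : 0 ≤ α * m := by positivity
  have hle : α * m ≤ m := mul_le_of_le_one_left (by positivity) hα1
  have hpow : (1 - u) ^ (-(α * m) - k) ≤ (((1 + lam) / 2) ^ (m + k))⁻¹ := by
    calc (1 - u) ^ (-(α * m) - k)
        ≤ ((1 + lam) / 2) ^ (-(α * m) - k) :=
          Real.rpow_le_rpow_of_nonpos hc (by linarith)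
            (by have : (0 : ℝ) ≤ k := k.cast_nonneg
                linarith)
      _ ≤ ((1 + lam) / 2) ^ (-((m + k : ℕ) : ℝ)) :=
          Real.rpow_le_rpow_of_exponent_ge hc (by linarith) (by push_cast; linarith)
      _ = (((1 + lam) / 2) ^ (m + k))⁻¹ := by
          rw [Real.rpow_neg hc.le, Real.rpow_natCast]
  have hnonneg : 0 ≤ (1 - u) ^ (-(α * m) - k) := Real.rpow_nonneg (by linarith) _
  have hasc := ascPochhammer_eval_le_add_pow hαm hle k
  have hasc0 := ascPochhammer_eval_nonneg hαm k
  rw [geometricTermDeriv, norm_mul, norm_mul, norm_pow, norm_neg, Real.norm_of_nonneg h0.le,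
    Real.norm_of_nonneg hasc0, Real.norm_of_nonneg hnonneg]
  calc lam ^ m * (ascPochhammer ℝ k).eval (α * m) * (1 - u) ^ (-(α * m) - k)
      ≤ lam ^ m * (m + k) ^ k * (((1 + lam) / 2) ^ (m + k))⁻¹ := by gcongr
    _ = geometricTermBound lam k m := by
      rw [geometricTermBound, div_pow lam, pow_add lam m k]
      push_cast
      field_simp

lemma summable_geometricTermDeriv {α lam : ℝ} (hα0 : 0 ≤ α) (hα1 : α ≤ 1) (h0 : 0 < lam)
    (h1 : lam < 1) (k : ℕ) {u : ℝ} (hu : u < (1 - lam) / 2) :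
    Summable (fun m => geometricTermDeriv α lam k m u) :=
  .of_norm_bounded (summable_geometricTermBound h0 h1 k)
    fun m => norm_geometricTermDeriv_le hα0 hα1 h0 h1 k m hu

lemma hasDerivAt_tsum_geometricTermDeriv {α lam : ℝ} (hα0 : 0 ≤ α) (hα1 : α ≤ 1) (h0 : 0 < lam)
    (h1 : lam < 1) (k : ℕ) {u : ℝ} (hu : u < (1 - lam) / 2) :
    HasDerivAt (fun v => ∑' m, geometricTermDeriv α lam k m v)
      (∑' m, geometricTermDeriv α lam (k + 1) m u) u :=
  hasDerivAt_tsum_of_isPreconnected (t := Set.Iio ((1 - lam) / 2))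
    (summable_geometricTermBound h0 h1 (k + 1)) isOpen_Iio isPreconnected_Iio
    (fun m v hv => hasDerivAt_geometricTermDeriv α lam k m
      (by have := Set.mem_Iio.1 hv; linarith))
    (fun m _ hv => norm_geometricTermDeriv_le hα0 hα1 h0 h1 (k + 1) m hv)
    hu (summable_geometricTermDeriv hα0 hα1 h0 h1 k hu) hu

lemma generating_function_eq_tsum {α lam : ℝ} (hα0 : 0 ≤ α) (hα1 : α ≤ 1) (h0 : 0 < lam)
    (h1 : lam < 1) {u : ℝ} (hu : u < (1 - lam) / 2) :
    lam * (1 - (1 - u) ^ α) / (lam + (1 - u) ^ α)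
      = 1 - (1 + lam) * ∑' m, geometricTermDeriv α lam 0 m u := by
  have hpos : 0 < 1 - u := by linarith
  have hw : 0 < (1 - u) ^ α := Real.rpow_pos_of_pos hpos α
  have hterm : ∀ m, geometricTermDeriv α lam 0 m u = (-lam * ((1 - u) ^ α)⁻¹) ^ m := by
    intro m
    rw [geometricTermDeriv, mul_pow, ← Real.rpow_neg hpos.le, ← Real.rpow_mul_natCast hpos.le]
    simp
  have hlt : lam < (1 - u) ^ α := by
    have hc : (0 : ℝ) < (1 + lam) / 2 := by linarith
    calc lam < (1 + lam) / 2 := by linarith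
      _ = ((1 + lam) / 2) ^ (1 : ℝ) := (Real.rpow_one _).symm
      _ ≤ ((1 + lam) / 2) ^ α := Real.rpow_le_rpow_of_exponent_ge hc (by linarith) hα1
      _ ≤ (1 - u) ^ α := Real.rpow_le_rpow hc.le (by linarith) hα0
  have hnorm : ‖-lam * ((1 - u) ^ α)⁻¹‖ < 1 := by
    rw [norm_mul, norm_neg, norm_inv, Real.norm_of_nonneg h0.le, Real.norm_of_nonneg hw.le,
      ← div_eq_mul_inv, div_lt_one hw]
    exact hlt
  simp_rw [hterm]
  rw [tsum_geometric_of_norm_lt_one hnorm]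
  have hden : 1 - -lam * ((1 - u) ^ α)⁻¹ = (lam + (1 - u) ^ α) / (1 - u) ^ α := by
    field_simp
    ring
  rw [hden]
  field_simp
  ring

lemma iteratedDeriv_generating_function {α lam : ℝ} (hα0 : 0 ≤ α) (hα1 : α ≤ 1) (h0 : 0 < lam)
    (h1 : lam < 1) (k : ℕ) {u : ℝ} (hu : u < (1 - lam) / 2) :
    iteratedDeriv (k + 1) (fun u : ℝ => lam * (1 - (1 - u) ^ α) / (lam + (1 - u) ^ α)) u
      = -((1 + lam) * ∑' m, geometricTermDeriv α lam (k + 1) m u) := by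
  induction k generalizing u with
  | zero =>
    rw [zero_add, iteratedDeriv_one]
    refine HasDerivAt.deriv ?_
    refine (((hasDerivAt_tsum_geometricTermDeriv hα0 hα1 h0 h1 0 hu).const_mul
      (1 + lam)).const_sub 1).congr_of_eventuallyEq ?_
    filter_upwards [Iio_mem_nhds hu] with v hv
    exact generating_function_eq_tsum hα0 hα1 h0 h1 hv
  | succ k ih =>
    rw [iteratedDeriv_succ]
    refine HasDerivAt.deriv ?_
    refine ((hasDerivAt_tsum_geometricTermDeriv hα0 hα1 h0 h1 (k + 1) hu).const_mul
      (1 + lam)).neg.congr_of_eventuallyEq ?_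
    filter_upwards [Iio_mem_nhds hu] with v hv
    exact ih hv

/-- For `α ∈ (0,1]`, `0 < λ < 1` and `n ≥ 1`: the series
`Σ_{m=0}^∞ (−λ)^m [(α(m+1))_n − (αm)_n]` converges absolutely, and the `n`-th Taylor
coefficient at `u = 0` of `u ↦ λ(1 − (1−u)^α)/(λ + (1−u)^α)` equals
`(λ/n!) Σ_{m=0}^∞ (−λ)^m [(α(m+1))_n − (αm)_n]`. -/
theorem mittagLeffler_transition_matrix_entries (α lam : ℝ) (n : ℕ)
    (hα : α ∈ Set.Ioc (0 : ℝ) 1) (hlam : lam ∈ Set.Ioo (0 : ℝ) 1) (hn : 1 ≤ n) :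
    Summable (fun m : ℕ => |(-lam) ^ m *
        ((ascPochhammer ℝ n).eval (α * ((m : ℝ) + 1)) - (ascPochhammer ℝ n).eval (α * (m : ℝ)))|) ∧
    (1 / (n.factorial : ℝ)) * iteratedDeriv n
        (fun u : ℝ => lam * (1 - (1 - u) ^ α) / (lam + (1 - u) ^ α)) 0
      = (lam / (n.factorial : ℝ)) * ∑' m : ℕ, (-lam) ^ m *
          ((ascPochhammer ℝ n).eval (α * ((m : ℝ) + 1)) - (ascPochhammer ℝ n).eval (α * (m : ℝ))) := by
  obtain ⟨hα0, hα1⟩ := hα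
  obtain ⟨h0, h1⟩ := hlam
  have hu : (0 : ℝ) < (1 - lam) / 2 := by linarith
  have hterm : ∀ m, geometricTermDeriv α lam n m 0
      = (-lam) ^ m * (ascPochhammer ℝ n).eval (α * (m : ℝ)) := by
    intro m
    simp [geometricTermDeriv]
  have hsum := summable_geometricTermDeriv hα0.le hα1 h0 h1 n hu
  have hderiv : iteratedDeriv n
      (fun u : ℝ => lam * (1 - (1 - u) ^ α) / (lam + (1 - u) ^ α)) 0
      = -((1 + lam) * ∑' m, geometricTermDeriv α lam n m 0) := by
    obtain ⟨k, rfl⟩ := Nat.exists_eq_add_of_le' hn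
    exact iteratedDeriv_generating_function hα0.le hα1 h0 h1 k hu
  simp_rw [hterm] at hsum hderiv
  set S := ∑' m : ℕ, (-lam) ^ m * (ascPochhammer ℝ n).eval (α * (m : ℝ)) with hS
  have hzero : (ascPochhammer ℝ n).eval 0 = 0 := ascPochhammer_ne_zero_eval_zero ℝ (by omega)
  have hshift : HasSum (fun m : ℕ => (-lam) ^ (m + 1) *
      (ascPochhammer ℝ n).eval (α * ((m : ℝ) + 1))) S := by
    have := (hasSum_nat_add_iff' 1).2 hsum.hasSum
    simpa [hzero, ← hS] using this
  have hdiff : HasSum (fun m : ℕ => (-lam) ^ m *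
      ((ascPochhammer ℝ n).eval (α * ((m : ℝ) + 1)) - (ascPochhammer ℝ n).eval (α * (m : ℝ))))
      ((-lam)⁻¹ * S - S) := by
    refine ((hshift.mul_left (-lam)⁻¹).sub hsum.hasSum).congr_fun ?_
    intro m
    have hne : -lam ≠ 0 := by linarith
    rw [pow_succ]
    field_simp
  refine ⟨hdiff.summable.abs, ?_⟩
  rw [hdiff.tsum_eq, hderiv]
  field_simp
  ring
end

section
/- Let β ∈ (0,1] and x ≥ 0. For every integer n ≥ 0, the n-th Taylor coefficient at u = 0 of the function u ↦ E_β(−x(1−u)) equals p_n := (x^n/n!) Σ_{m=0}^∞ ((m+n)!/m!) (−x)^m / Γ(β(m+n) + 1), and the resulting fractional Poisson state probabilities are normalized: Σ_{n=0}^∞ p_n = 1. -/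
/-- Mittag-Leffler function `E_β(z) = Σ_{m=0}^∞ z^m / Γ(β m + 1)`. -/
noncomputable def mittagLefflerOne (β z : ℝ) : ℝ :=
  ∑' m : ℕ, z ^ m / Real.Gamma (β * m + 1)

open Finset in
/-- Re-expansion of an entire power series `∑ aₖ zᵏ` about the point `v`. -/
theorem hasSum_reexpand_of_summable {a : ℕ → ℝ}
    (ha : ∀ y : ℝ, Summable fun k => |a k| * y ^ k) (v w : ℝ) :
    HasSum (fun n : ℕ => (∑' m : ℕ, a (m + n) * ((m + n).choose n : ℝ) * v ^ m) * w ^ n)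
      (∑' k : ℕ, a k * (v + w) ^ k) := by
  set F : ℕ × ℕ → ℝ := fun p =>
    a (p.2 + p.1) * ((p.2 + p.1).choose p.1 : ℝ) * v ^ p.2 * w ^ p.1 with hF
  have inner (c : ℕ → ℝ) (v w : ℝ) (k : ℕ) :
      ∑ p ∈ antidiagonal k, c (p.2 + p.1) * ((p.2 + p.1).choose p.1 : ℝ) * v ^ p.2 * w ^ p.1
        = c k * (v + w) ^ k := by
    rw [add_comm v w, (Commute.all w v).add_pow', mul_sum]
    refine sum_congr rfl fun p hp => ?_
    have hk : p.2 + p.1 = k := by rw [add_comm]; exact mem_antidiagonal.mp hp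
    rw [hk, nsmul_eq_mul]
    ring
  have hsig : Summable (F ∘ HasAntidiagonal.sigmaAntidiagonalEquivProd) := by
    refine Summable.of_abs ?_
    refine (summable_sigma_of_nonneg fun _ => abs_nonneg _).2
      ⟨fun k => (hasSum_fintype _).summable, ?_⟩
    refine (ha (|v| + |w|)).congr fun k => ?_
    rw [tsum_fintype, ← inner (fun k => |a k|) |v| |w| k, ← sum_coe_sort]
    refine sum_congr rfl fun p _ => ?_
    simp [hF, abs_mul, abs_pow]
  have hsum : Summable F := HasAntidiagonal.sigmaAntidiagonalEquivProd.summable_iff.mp hsig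
  have htot : ∑' p, F p = ∑' k : ℕ, a k * (v + w) ^ k := by
    rw [← HasAntidiagonal.sigmaAntidiagonalEquivProd.tsum_eq F]
    refine (hsig.tsum_sigma' fun k => (hasSum_fintype _).summable).trans ?_
    refine tsum_congr fun k => ?_
    rw [tsum_fintype, ← inner a v w k]
    exact sum_coe_sort (antidiagonal k) F
  rw [← htot]
  have h := hsum.hasSum.prod_fiberwise fun n => (hsum.prod_factor n).hasSum
  simpa only [hF, tsum_mul_right] using h

/-- The Taylor coefficients at `0` of the sum of an everywhere convergent power series. -/
theorem iteratedDeriv_zero_of_hasSum {f : ℝ → ℝ} {c : ℕ → ℝ}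
    (h : ∀ u : ℝ, HasSum (fun n => c n * u ^ n) (f u)) (n : ℕ) :
    iteratedDeriv n f 0 = n.factorial * c n := by
  have hf : HasFPowerSeriesOnBall f (FormalMultilinearSeries.ofScalars ℝ c) 0 1 := by
    refine ⟨?_, one_pos, fun {y} _ => ?_⟩
    · refine FormalMultilinearSeries.le_radius_of_summable_norm (r := 1) _ ?_
      simpa using (h 1).summable.abs
    · simpa [mul_comm] using h y
  have := hf.factorial_smul 1 n
  rw [iteratedDeriv_eq_iteratedFDeriv, ← this]
  simp

open MeasureTheory Set in
theorem rpow_mul_exp_neg_le_Gamma {R s : ℝ} (hR : 0 < R) (hs : 0 ≤ s) :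
    R ^ s * Real.exp (-R) ≤ Real.Gamma (s + 1) := by
  have hint := Real.GammaIntegral_convergent (s := s + 1) (by linarith)
  have hsub : Ioi R ⊆ Ioi 0 := Ioi_subset_Ioi hR.le
  rw [Real.Gamma_eq_integral (by linarith), ← integral_exp_neg_Ioi R, ← integral_const_mul]
  calc ∫ t in Ioi R, R ^ s * Real.exp (-t)
      ≤ ∫ t in Ioi R, Real.exp (-t) * t ^ (s + 1 - 1) := by
        refine setIntegral_mono_on ((integrableOn_exp_neg_Ioi R).const_mul _)
          (hint.mono_set hsub) measurableSet_Ioi fun t ht => ?_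
        rw [add_sub_cancel_right, mul_comm]
        gcongr
        exact (mem_Ioi.mp ht).le
    _ ≤ ∫ t in Ioi 0, Real.exp (-t) * t ^ (s + 1 - 1) := by
        refine setIntegral_mono_set hint ?_ hsub.eventuallyLE
        filter_upwards [ae_restrict_mem measurableSet_Ioi] with t ht
        exact mul_nonneg (Real.exp_pos _).le (Real.rpow_nonneg (mem_Ioi.mp ht).le _)

/-- The Mittag-Leffler series converges absolutely everywhere. -/
theorem summable_abs_inv_Gamma_mul_pow {β : ℝ} (hβ : 0 < β) (y : ℝ) :
    Summable fun k : ℕ => |(Real.Gamma (β * k + 1))⁻¹| * y ^ k := by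
  set A : ℝ := 2 * (|y| + 1) with hA
  have hApos : 0 < A := by positivity
  set R : ℝ := A ^ β⁻¹ with hRdef
  have hR : 0 < R := Real.rpow_pos_of_pos hApos _
  have hgeom : Summable fun k : ℕ => Real.exp R * (|y| / A) ^ k := by
    refine (summable_geometric_of_lt_one (by positivity) ?_).mul_left _
    rw [div_lt_one hApos]
    linarith [abs_nonneg y]
  refine Summable.of_norm_bounded hgeom fun k => ?_
  have hk : R ^ (β * k) = A ^ k := by
    rw [hRdef, ← Real.rpow_mul hApos.le, ← mul_assoc, inv_mul_cancel₀ hβ.ne', one_mul,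
      Real.rpow_natCast]
  have hle := rpow_mul_exp_neg_le_Gamma hR (s := β * k) (by positivity)
  rw [hk] at hle
  have hpos : 0 < A ^ k * Real.exp (-R) := by positivity
  rw [norm_mul, norm_pow, Real.norm_eq_abs, Real.norm_eq_abs, abs_abs,
    abs_of_pos (inv_pos.mpr (hpos.trans_le hle))]
  calc (Real.Gamma (β * k + 1))⁻¹ * |y| ^ k
      ≤ (A ^ k * Real.exp (-R))⁻¹ * |y| ^ k := by gcongr
    _ = Real.exp R * (|y| / A) ^ k := by
        rw [Real.exp_neg, mul_inv, inv_inv, div_pow]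
        ring

theorem hasSum_mittagLefflerOne_taylor {β : ℝ} (hβ : 0 < β) (x u : ℝ) :
    HasSum (fun n : ℕ => (x ^ n / (n.factorial : ℝ)) * (∑' m : ℕ,
        (((m + n).factorial : ℝ) / (m.factorial : ℝ)) * (-x) ^ m /
          Real.Gamma (β * ((m : ℝ) + (n : ℝ)) + 1)) * u ^ n)
      (mittagLefflerOne β (-(x * (1 - u)))) := by
  have h := hasSum_reexpand_of_summable (summable_abs_inv_Gamma_mul_pow hβ) (-x) (x * u)
  convert h using 1
  · funext n
    rw [mul_pow, mul_right_comm, ← tsum_mul_left, ← tsum_mul_right]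
    refine tsum_congr fun m => ?_
    rw [Nat.cast_choose ℝ (Nat.le_add_left n m), Nat.add_sub_cancel]
    push_cast
    field_simp
  · refine tsum_congr fun k => ?_
    rw [div_eq_inv_mul]
    ring

theorem mittagLefflerOne_zero (β : ℝ) : mittagLefflerOne β 0 = 1 := by
  rw [mittagLefflerOne, tsum_eq_single 0 fun m hm => by simp [hm]]
  simp

/-- For `β ∈ (0,1]` and `x ≥ 0`: the `n`-th Taylor coefficient at `u = 0` of
`u ↦ E_β(−x(1−u))` equals
`p_n = (x^n/n!) Σ_{m=0}^∞ ((m+n)!/m!)(−x)^m/Γ(β(m+n)+1)`,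
and the fractional Poisson state probabilities are normalized: `Σ_{n=0}^∞ p_n = 1`. -/
theorem fractional_poisson_state_probabilities (β x : ℝ)
    (hβ : β ∈ Set.Ioc (0 : ℝ) 1) (hx : 0 ≤ x) :
    (∀ n : ℕ, (1 / (n.factorial : ℝ)) * iteratedDeriv n
        (fun u : ℝ => mittagLefflerOne β (-(x * (1 - u)))) 0
      = (x ^ n / (n.factorial : ℝ)) * ∑' m : ℕ,
          (((m + n).factorial : ℝ) / (m.factorial : ℝ)) * (-x) ^ m /
            Real.Gamma (β * ((m : ℝ) + (n : ℝ)) + 1)) ∧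
    (∑' n : ℕ, (x ^ n / (n.factorial : ℝ)) * ∑' m : ℕ,
        (((m + n).factorial : ℝ) / (m.factorial : ℝ)) * (-x) ^ m /
          Real.Gamma (β * ((m : ℝ) + (n : ℝ)) + 1)) = 1 := by
  refine ⟨fun n => ?_, ?_⟩
  · rw [iteratedDeriv_zero_of_hasSum (hasSum_mittagLefflerOne_taylor hβ.1 x) n, ← mul_assoc,
      one_div_mul_cancel (by positivity), one_mul]
  · have h := hasSum_mittagLefflerOne_taylor hβ.1 x 1
    simpa only [one_pow, mul_one, sub_self, mul_zero, neg_zero, mittagLefflerOne_zero]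
      using h.tsum_eq
end

section
/- Let α ∈ (0,1), 0 < λ < 1, and m, n ≥ 0 integers. Then the series Σ_{s=0}^∞ ((m)_s (−λ)^s / s!) · (αs)_n converges absolutely, and the n-th Taylor coefficient at u = 0 of the function u ↦ (1 + λ(1−u)^{−α})^{−m} equals (1/n!) Σ_{s=0}^∞ ((m)_s (−λ)^s / s!) · (αs)_n (a discrete approximation of the Prabhakar kernel). -/
open Polynomial

open Filter Asymptotics Topology

/-- A power series whose coefficients grow polynomially may be differentiated term by term on the
open unit disc. -/
theorem hasDerivAt_tsum_mul_pow_of_isBigO {b : ℕ → ℝ} {k : ℕ}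
    (hb : b =O[atTop] fun s : ℕ => ((s ^ k : ℕ) : ℝ)) {x : ℝ} (hx : |x| < 1) :
    HasDerivAt (fun y => ∑' s, b s * y ^ s) (∑' s, b s * (s * x ^ (s - 1))) x := by
  obtain ⟨r, hxr, hr⟩ := exists_between hx
  have hr0 : 0 < r := (abs_nonneg x).trans_lt hxr
  have hb' : (fun s : ℕ => b s * s) =O[atTop] fun s : ℕ => ((s ^ (k + 1) : ℕ) : ℝ) := by
    simpa [pow_succ] using hb.mul (isBigO_refl (fun s : ℕ => (s : ℝ)) atTop)
  have hsum : Summable fun s : ℕ => ‖b s * s * r ^ s‖ * r⁻¹ :=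
    (summable_norm_mul_geometric_of_norm_lt_one'
      (by rwa [Real.norm_eq_abs, abs_of_pos hr0]) hb').mul_right _
  refine hasDerivAt_tsum_of_isPreconnected (t := Metric.ball 0 r) (y₀ := x)
    (g' := fun s y => b s * (s * y ^ (s - 1))) hsum
    Metric.isOpen_ball (convex_ball 0 r).isPreconnected
    (fun s y _ => (hasDerivAt_pow s y).const_mul (b s)) (fun s y hy => ?_) (by simpa using hxr)
    (summable_norm_mul_geometric_of_norm_lt_one' hx hb).of_norm (by simpa using hxr)
  rcases s with _ | s
  · simp
  · have hy' : |y| ≤ r := by simpa using (mem_ball_zero_iff.1 hy).le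
    simp only [Nat.add_sub_cancel, norm_mul, norm_pow, Real.norm_eq_abs, abs_of_pos hr0]
    rw [pow_succ, ← mul_assoc, ← mul_assoc, mul_inv_cancel_right₀ hr0.ne']
    gcongr

/-- The binomial series with exponent `-m`. -/
theorem hasSum_ascPochhammer_div_factorial_mul_pow (m : ℕ) {x : ℝ} (hx : |x| < 1) :
    HasSum (fun s : ℕ => (ascPochhammer ℝ s).eval (m : ℝ) * (-1) ^ s / (s.factorial : ℝ) * x ^ s)
      ((1 + x) ^ m)⁻¹ := by
  rcases m with _ | k
  · have h := hasSum_ite_eq (0 : ℕ) (1 : ℝ)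
    convert! h using 1
    · ext s
      rcases eq_or_ne s 0 with rfl | hs
      · simp
      · simp [ascPochhammer_ne_zero_eval_zero, hs]
    · simp
  · have h := hasSum_choose_mul_geometric_of_norm_lt_one k (r := -x) (by simpa using hx)
    convert! h using 1
    · ext s
      rw [← Nat.cast_ascFactorial, Nat.ascFactorial_eq_factorial_mul_choose, add_comm s k,
        Nat.choose_symm_add, neg_pow x]
      push_cast
      field_simp
    · simp

theorem isBigO_ascPochhammer_div_factorial (m : ℕ) :
    (fun s : ℕ => (ascPochhammer ℝ s).eval (m : ℝ) * (-1) ^ s / (s.factorial : ℝ))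
      =O[atTop] fun s : ℕ => ((s ^ m : ℕ) : ℝ) := by
  rcases m with _ | k
  · refine IsBigO.of_bound 1 ?_
    filter_upwards [eventually_ne_atTop 0] with s hs
    simp [ascPochhammer_ne_zero_eval_zero, hs]
  · refine IsBigO.of_bound (2 ^ k) ?_
    filter_upwards [eventually_ge_atTop (k + 1)] with s hs
    have hval : ‖(ascPochhammer ℝ s).eval ((k + 1 : ℕ) : ℝ) * (-1) ^ s / (s.factorial : ℝ)‖
        = ((s + k).choose k : ℝ) := by
      rw [← Nat.cast_ascFactorial, Nat.ascFactorial_eq_factorial_mul_choose, add_comm s k,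
        Nat.choose_symm_add]
      push_cast
      simp
      field_simp
    rw [hval, Real.norm_natCast]
    norm_cast
    calc (s + k).choose k ≤ (2 * s).choose k := Nat.choose_le_choose k (by lia)
      _ ≤ (2 * s) ^ k := Nat.choose_le_pow _ _
      _ = 2 ^ k * s ^ k := mul_pow 2 s k
      _ ≤ 2 ^ k * s ^ (k + 1) := by gcongr <;> lia

theorem isBigO_ascPochhammer_eval_mul (α : ℝ) (n : ℕ) :
    (fun s : ℕ => (ascPochhammer ℝ n).eval (α * (s : ℝ)))
      =O[atTop] fun s : ℕ => ((s ^ n : ℕ) : ℝ) := by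
  induction n with
  | zero => simpa using isBigO_refl (fun _ : ℕ => (1 : ℝ)) atTop
  | succ n ih =>
    have hlin : (fun s : ℕ => α * (s : ℝ) + n) =O[atTop] fun s : ℕ => (s : ℝ) := by
      refine (isBigO_const_mul_self α _ _).add (IsBigO.of_bound n ?_)
      filter_upwards [eventually_ge_atTop 1] with s hs
      have : (1 : ℝ) ≤ s := by exact_mod_cast hs
      simpa using le_mul_of_one_le_right (Nat.cast_nonneg n) this
    simpa [ascPochhammer_succ_eval, pow_succ] using ih.mul hlin

/-- The polynomially growing coefficients of the series obtained by differentiating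
`(1 + x) ^ (-m)` along `x = lam * (1 - u) ^ (-α)`. -/
noncomputable def prabhakarCoeff (α : ℝ) (m n s : ℕ) : ℝ :=
  (ascPochhammer ℝ s).eval (m : ℝ) * (-1) ^ s / (s.factorial : ℝ) *
    (ascPochhammer ℝ n).eval (α * (s : ℝ))

theorem prabhakarCoeff_succ (α : ℝ) (m n s : ℕ) :
    prabhakarCoeff α m (n + 1) s = prabhakarCoeff α m n s * (α * s + n) := by
  rw [prabhakarCoeff, prabhakarCoeff, ascPochhammer_succ_eval, mul_assoc]

theorem isBigO_prabhakarCoeff (α : ℝ) (m n : ℕ) :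
    prabhakarCoeff α m n =O[atTop] fun s : ℕ => ((s ^ (m + n) : ℕ) : ℝ) := by
  simp only [pow_add, Nat.cast_mul]
  exact (isBigO_ascPochhammer_div_factorial m).mul (isBigO_ascPochhammer_eval_mul α n)

theorem summable_abs_prabhakarCoeff_mul_pow (α : ℝ) (m n : ℕ) {x : ℝ} (hx : |x| < 1) :
    Summable fun s => |prabhakarCoeff α m n s * x ^ s| :=
  summable_norm_mul_geometric_of_norm_lt_one' hx (isBigO_prabhakarCoeff α m n)

theorem summable_prabhakarCoeff_mul_pow (α : ℝ) (m n : ℕ) {x : ℝ} (hx : |x| < 1) :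
    Summable fun s => prabhakarCoeff α m n s * x ^ s :=
  (summable_abs_prabhakarCoeff_mul_pow α m n hx).of_abs

/-- Euler operator recursion for the differentiated series. -/
theorem tsum_prabhakarCoeff_succ (α : ℝ) (m n : ℕ) {x : ℝ} (hx : |x| < 1) :
    ∑' s, prabhakarCoeff α m (n + 1) s * x ^ s =
      α * x * ∑' s, prabhakarCoeff α m n s * (s * x ^ (s - 1)) +
        n * ∑' s, prabhakarCoeff α m n s * x ^ s := by
  have hsplit (s : ℕ) : prabhakarCoeff α m (n + 1) s * x ^ s =
      α * x * (prabhakarCoeff α m n s * (s * x ^ (s - 1))) +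
        n * (prabhakarCoeff α m n s * x ^ s) := by
    rw [prabhakarCoeff_succ]
    rcases s with _ | s
    · simp; ring
    · rw [Nat.add_sub_cancel, pow_succ]; ring
  have hs₀ := (summable_prabhakarCoeff_mul_pow α m n hx).mul_left (n : ℝ)
  have hs₁ : Summable fun s : ℕ => α * x * (prabhakarCoeff α m n s * (s * x ^ (s - 1))) := by
    refine ((summable_prabhakarCoeff_mul_pow α m (n + 1) hx).sub hs₀).congr fun s => ?_
    rw [hsplit, add_sub_cancel_right]
  rw [tsum_congr hsplit, hs₁.tsum_add hs₀, tsum_mul_left, tsum_mul_left]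

theorem hasDerivAt_one_sub_rpow (β : ℝ) {u : ℝ} (hu : u < 1) :
    HasDerivAt (fun v : ℝ => (1 - v) ^ β) (-β * (1 - u) ^ (β - 1)) u := by
  simpa using ((hasDerivAt_id u).const_sub 1).rpow_const (p := β) (.inl (sub_pos.2 hu).ne')

theorem hasDerivAt_one_sub_rpow_mul_tsum_prabhakarCoeff (α lam : ℝ) (m n : ℕ) {u : ℝ} (hu : u < 1)
    (hx : |lam * (1 - u) ^ (-α)| < 1) :
    HasDerivAt
      (fun v : ℝ => (1 - v) ^ (-(n : ℝ)) *
        ∑' s, prabhakarCoeff α m n s * (lam * (1 - v) ^ (-α)) ^ s)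
      ((1 - u) ^ (-((n + 1 : ℕ) : ℝ)) *
        ∑' s, prabhakarCoeff α m (n + 1) s * (lam * (1 - u) ^ (-α)) ^ s) u := by
  have hseries := (hasDerivAt_tsum_mul_pow_of_isBigO (isBigO_prabhakarCoeff α m n) hx).comp u
    ((hasDerivAt_one_sub_rpow (-α) hu).const_mul lam)
  convert! (hasDerivAt_one_sub_rpow (-(n : ℝ)) hu).mul hseries using 1
  rw [tsum_prabhakarCoeff_succ α m n hx, Real.rpow_sub_one (sub_pos.2 hu).ne',
    Real.rpow_sub_one (sub_pos.2 hu).ne',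
    show -((n + 1 : ℕ) : ℝ) = -(n : ℝ) - 1 by push_cast; ring,
    Real.rpow_sub_one (sub_pos.2 hu).ne']
  simp only [Function.comp_apply]
  ring

theorem eventually_iteratedDeriv_eq_tsum_prabhakarCoeff {α lam : ℝ} (m n : ℕ)
    (hlam : |lam| < 1) :
    ∀ᶠ u in 𝓝 (0 : ℝ),
      iteratedDeriv n (fun v : ℝ => ((1 + lam * (1 - v) ^ (-α)) ^ m)⁻¹) u =
        (1 - u) ^ (-(n : ℝ)) * ∑' s, prabhakarCoeff α m n s * (lam * (1 - u) ^ (-α)) ^ s := by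
  have hlt : ∀ᶠ u in 𝓝 (0 : ℝ), u < 1 := eventually_lt_nhds one_pos
  have hball : ∀ᶠ u in 𝓝 (0 : ℝ), |lam * (1 - u) ^ (-α)| < 1 := by
    have hcont : ContinuousAt (fun u : ℝ => |lam * (1 - u) ^ (-α)|) 0 :=
      ((hasDerivAt_one_sub_rpow (-α) one_pos).continuousAt.const_mul lam).abs
    exact hcont.eventually_lt continuousAt_const (by simpa using hlam)
  induction n with
  | zero =>
    filter_upwards [hball] with u hu
    simpa [prabhakarCoeff] using (hasSum_ascPochhammer_div_factorial_mul_pow m hu).tsum_eq.symm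
  | succ n ih =>
    filter_upwards [ih.eventually_nhds, hlt, hball] with u hih hu hx
    rw [iteratedDeriv_succ, EventuallyEq.deriv_eq hih]
    exact (hasDerivAt_one_sub_rpow_mul_tsum_prabhakarCoeff α lam m n hu hx).deriv

/-- For `α ∈ (0,1)`, `0 < λ < 1` and integers `m, n ≥ 0`: the series
`Σ_{s=0}^∞ ((m)_s(−λ)^s/s!)(αs)_n` converges absolutely, and the `n`-th Taylor
coefficient at `u = 0` of `u ↦ (1 + λ(1−u)^{−α})^{−m}` equals
`(1/n!) Σ_{s=0}^∞ ((m)_s(−λ)^s/s!)(αs)_n` (discrete approximation of a Prabhakar kernel). -/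
theorem discrete_prabhakar_kernel (α lam : ℝ) (m n : ℕ)
    (hα : α ∈ Set.Ioo (0 : ℝ) 1) (hlam : lam ∈ Set.Ioo (0 : ℝ) 1) :
    Summable (fun s : ℕ => |(ascPochhammer ℝ s).eval (m : ℝ) * (-lam) ^ s / (s.factorial : ℝ) *
        (ascPochhammer ℝ n).eval (α * (s : ℝ))|) ∧
    (1 / (n.factorial : ℝ)) * iteratedDeriv n
        (fun u : ℝ => (((1 + lam * (1 - u) ^ (-α)) ^ m)⁻¹)) 0
      = (1 / (n.factorial : ℝ)) * ∑' s : ℕ,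
          (ascPochhammer ℝ s).eval (m : ℝ) * (-lam) ^ s / (s.factorial : ℝ) *
            (ascPochhammer ℝ n).eval (α * (s : ℝ)) := by
  have hlam' : |lam| < 1 := by rw [abs_of_pos hlam.1]; exact hlam.2
  have hterm (s : ℕ) : (ascPochhammer ℝ s).eval (m : ℝ) * (-lam) ^ s / (s.factorial : ℝ) *
      (ascPochhammer ℝ n).eval (α * (s : ℝ)) = prabhakarCoeff α m n s * lam ^ s := by
    rw [prabhakarCoeff, neg_pow lam]
    ring
  simp only [hterm]
  refine ⟨summable_abs_prabhakarCoeff_mul_pow α m n hlam', ?_⟩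
  rw [(eventually_iteratedDeriv_eq_tsum_prabhakarCoeff m n hlam').self_of_nhds]
  simp
end

section
/- For every α ∈ (0,1] and λ₀ > 0, the Mittag-Leffler density is normalized: ∫_0^∞ λ₀ x^{α−1} E_{α,α}(−λ₀ x^α) dx = 1. -/
open MeasureTheory

section

open Real Set Filter Topology

/-- A function integrable on `(0, ∞)` whose Laplace transform vanishes at every natural number
is almost everywhere zero. -/
theorem ae_eq_zero_of_integral_exp_neg_nat_mul_eq_zero {h : ℝ → ℝ} (hh : IntegrableOn h (Ioi 0))
    (h0 : ∀ n : ℕ, ∫ x in Ioi (0 : ℝ), exp (-(n * x)) * h x = 0) :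
    h =ᵐ[volume.restrict (Ioi 0)] 0 := by
  set ν := volume.restrict (Ioi (0 : ℝ)) with hν
  have hh' : Integrable h ν := hh
  have hneg : Integrable (fun x ↦ -h x) ν := hh'.neg
  have hphase (t : ℝ) : ∫ x, (h x : ℂ) * Complex.exp (t * exp (-x) * Complex.I) ∂ν = 0 := by
    have hbound (n : ℕ) : ∀ᵐ x ∂ν, ‖((t * Complex.I) ^ n / n.factorial : ℂ) *
        ((exp (-(n * x)) * h x : ℝ) : ℂ)‖ ≤ |t| ^ n / n.factorial * ‖h x‖ := by
      filter_upwards [ae_restrict_mem measurableSet_Ioi] with x hx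
      rw [norm_mul, norm_div, norm_pow, norm_mul, Complex.norm_I, mul_one, Complex.norm_real,
        Complex.norm_natCast, Complex.norm_real, norm_mul, norm_eq_abs, norm_eq_abs (exp _),
        abs_of_pos (exp_pos _)]
      gcongr
      refine mul_le_of_le_one_left (norm_nonneg _) (exp_le_one_iff.2 ?_)
      have : (0 : ℝ) < x := hx
      simp only [Left.neg_nonpos_iff]
      positivity
    have hint (n : ℕ) : Integrable (fun x ↦ ((t * Complex.I) ^ n / n.factorial : ℂ) *
        ((exp (-(n * x)) * h x : ℝ) : ℂ)) ν := by
      refine Integrable.mono' (hh'.norm.const_mul (|t| ^ n / n.factorial)) ?_ (hbound n)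
      have := hh'.1
      fun_prop
    have hsum := hasSum_integral_of_summable_integral_norm hint (by
      refine Summable.of_nonneg_of_le (fun n ↦ integral_nonneg fun x ↦ norm_nonneg _)
        (fun n ↦ integral_mono_ae (hint n).norm
          (hh'.norm.const_mul (|t| ^ n / n.factorial)) (hbound n)) ?_
      simp_rw [integral_const_mul]
      exact (Real.summable_pow_div_factorial |t|).mul_right _)
    have hzero (n : ℕ) : ∫ x, ((t * Complex.I) ^ n / n.factorial : ℂ) *
        ((exp (-(n * x)) * h x : ℝ) : ℂ) ∂ν = 0 := by
      rw [integral_const_mul, integral_complex_ofReal, h0 n]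
      simp
    simp_rw [hzero] at hsum
    rw [← hsum.unique hasSum_zero]
    refine integral_congr_ae (.of_forall fun x ↦ ?_)
    have hexp := (NormedSpace.expSeries_div_hasSum_exp (t * exp (-x) * Complex.I : ℂ)).mul_left
      (h x : ℂ)
    rw [← Complex.exp_eq_exp_ℂ] at hexp
    refine (hexp.tsum_eq.symm.trans (tsum_congr fun n ↦ ?_))
    have : exp (-(n * x)) = exp (-x) ^ n := by rw [← exp_nat_mul]; ring_nf
    rw [this]
    push_cast
    ring
  have hpos : Measurable fun x : ℝ ↦ exp (-x) := by fun_prop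
  have hemb : MeasurableEmbedding fun x : ℝ ↦ exp (-x) :=
    hpos.measurableEmbedding fun x y hxy ↦ by simpa using hxy
  have hchar {f : ℝ → ℝ} (hf : Integrable f ν) (t : ℝ) :
      charFun ((ν.withDensity fun x ↦ ENNReal.ofReal (f x)).map fun x ↦ exp (-x)) t =
        ∫ x, ((max (f x) 0 : ℝ) : ℂ) * Complex.exp (t * exp (-x) * Complex.I) ∂ν := by
    rw [charFun_apply_real, hemb.integral_map,
      integral_withDensity_eq_integral_toReal_smul₀ hf.1.aemeasurable.ennreal_ofReal (by simp)]
    refine integral_congr_ae (.of_forall fun x ↦ ?_)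
    simp only [ENNReal.toReal_ofReal', Complex.real_smul]
  have hpart {f : ℝ → ℝ} (hf : Integrable f ν) (t : ℝ) :
      Integrable (fun x ↦ ((max (f x) 0 : ℝ) : ℂ) * Complex.exp (t * exp (-x) * Complex.I)) ν := by
    refine Integrable.mono' hf.norm ?_ (.of_forall fun x ↦ ?_)
    · have := hf.pos_part.1
      fun_prop
    · have : ‖Complex.exp (t * exp (-x) * Complex.I)‖ = 1 := by
        exact_mod_cast Complex.norm_exp_ofReal_mul_I (t * exp (-x))
      rw [norm_mul, this, mul_one, Complex.norm_real, norm_eq_abs, abs_of_nonneg (le_max_right _ _)]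
      exact max_le (le_abs_self _) (abs_nonneg _)
  have hfin1 : IsFiniteMeasure (ν.withDensity fun x ↦ ENNReal.ofReal (h x)) :=
    isFiniteMeasure_withDensity_ofReal hh'.2
  have hfin2 : IsFiniteMeasure (ν.withDensity fun x ↦ ENNReal.ofReal (-h x)) :=
    isFiniteMeasure_withDensity_ofReal hneg.2
  have hmap : (ν.withDensity fun x ↦ ENNReal.ofReal (h x)).map (fun x ↦ exp (-x)) =
      (ν.withDensity fun x ↦ ENNReal.ofReal (-h x)).map fun x ↦ exp (-x) := by
    refine Measure.ext_of_charFun (funext fun t ↦ ?_)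
    rw [hchar hh', hchar hneg, ← sub_eq_zero, ← integral_sub (hpart hh' t) (hpart hneg t),
      ← hphase t]
    refine integral_congr_ae (.of_forall fun x ↦ ?_)
    dsimp only
    rw [← sub_mul, ← Complex.ofReal_sub, max_zero_sub_max_neg_zero_eq_self]
  have hmeas := congrArg (Measure.comap fun x : ℝ ↦ exp (-x)) hmap
  rw [hemb.comap_map, hemb.comap_map, withDensity_eq_iff hh'.1.aemeasurable.ennreal_ofReal
    hneg.1.aemeasurable.ennreal_ofReal hh'.lintegral_lt_top.ne] at hmeas
  filter_upwards [hmeas] with x hx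
  rcases lt_trichotomy (h x) 0 with hx0 | hx0 | hx0
  · rw [ENNReal.ofReal_of_nonpos hx0.le, eq_comm, ENNReal.ofReal_eq_zero] at hx
    linarith
  · exact hx0
  · rw [ENNReal.ofReal_of_nonpos (neg_nonpos.2 hx0.le), ENNReal.ofReal_eq_zero] at hx
    linarith

/-- The Laplace transform of the Mittag-Leffler density, to the right of its abscissa. -/
theorem integral_exp_neg_mul_mittagLeffler {α l s : ℝ} (hα : 0 < α) (hl : 0 < l) (hs : 0 < s)
    (hls : l < s ^ α) :
    ∫ x in Ioi (0 : ℝ), exp (-(s * x)) * (l * x ^ (α - 1) * mittagLeffler α α (-(l * x ^ α))) =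
      l / (s ^ α + l) := by
  have hsα : 0 < s ^ α := rpow_pos_of_pos hs α
  have harg (m : ℕ) : 0 < α * m + α := by positivity
  have hG (m : ℕ) : 0 < Gamma (α * m + α) := Gamma_pos_of_pos (harg m)
  set F : ℕ → ℝ → ℝ := fun m x ↦ (l * (-l) ^ m / Gamma (α * m + α)) *
    (x ^ (α * m + α - 1) * exp (-(s * x))) with hF
  have hbase (m : ℕ) : ∫ x in Ioi (0 : ℝ), x ^ (α * m + α - 1) * exp (-(s * x)) =
      ((s ^ α)⁻¹) ^ (m + 1) * Gamma (α * m + α) := by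
    rw [integral_rpow_mul_exp_neg_mul_Ioi (harg m) hs, one_div, inv_rpow hs.le, inv_pow,
      ← rpow_natCast, ← rpow_mul hs.le]
    push_cast
    ring_nf
  have hbase_int (m : ℕ) :
      IntegrableOn (fun x ↦ x ^ (α * m + α - 1) * exp (-(s * x))) (Ioi (0 : ℝ)) :=
    .of_integral_ne_zero (by rw [hbase]; have := hG m; positivity)
  have hF_int (m : ℕ) : Integrable (F m) (volume.restrict (Ioi 0)) := (hbase_int m).const_mul _
  have hF_norm (m : ℕ) : ∫ x in Ioi (0 : ℝ), ‖F m x‖ = l / s ^ α * (l / s ^ α) ^ m := by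
    have : ∀ x ∈ Ioi (0 : ℝ), ‖F m x‖ = (l * l ^ m / Gamma (α * m + α)) *
        (x ^ (α * m + α - 1) * exp (-(s * x))) := fun x hx ↦ by
      have hx' : (0 : ℝ) < x := hx
      rw [hF, norm_mul, norm_div, norm_mul, norm_pow, norm_neg, norm_of_nonneg hl.le,
        norm_of_nonneg (hG m).le, norm_of_nonneg (by positivity)]
    rw [setIntegral_congr_fun measurableSet_Ioi this, integral_const_mul, hbase, div_pow, inv_pow]
    have := (hG m).ne'
    field_simp
    ring
  have hsum := hasSum_integral_of_summable_integral_norm hF_int (by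
    simp_rw [hF_norm]
    exact (summable_geometric_of_lt_one (by positivity) ((div_lt_one hsα).2 hls)).mul_left _)
  have hgeom : HasSum (fun m : ℕ ↦ l / s ^ α * (-(l / s ^ α)) ^ m)
      (l / s ^ α * (1 - -(l / s ^ α))⁻¹) :=
    (hasSum_geometric_of_abs_lt_one (by
      rw [abs_neg, abs_of_pos (by positivity)]; exact (div_lt_one hsα).2 hls)).mul_left _
  have hterm (m : ℕ) : ∫ x in Ioi (0 : ℝ), F m x = l / s ^ α * (-(l / s ^ α)) ^ m := by
    rw [hF, integral_const_mul, hbase]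
    have := (hG m).ne'
    rw [← neg_div, div_pow, inv_pow]
    field_simp
    ring
  simp_rw [hterm] at hsum
  have hval : l / s ^ α * (1 - -(l / s ^ α))⁻¹ = l / (s ^ α + l) := by
    have : s ^ α + l ≠ 0 := by positivity
    rw [sub_neg_eq_add, show 1 + l / s ^ α = (s ^ α + l) / s ^ α by field_simp]
    field_simp
  rw [← hval, ← hsum.unique hgeom]
  refine setIntegral_congr_fun measurableSet_Ioi fun x hx ↦ ?_
  have hx' : (0 : ℝ) < x := hx
  simp only [mittagLeffler, ← tsum_mul_left]
  refine tsum_congr fun m ↦ ?_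
  have : x ^ (α * m + α - 1) = x ^ (α - 1) * (x ^ α) ^ m := by
    rw [← rpow_natCast, ← rpow_mul hx'.le, ← rpow_add hx']
    ring_nf
  rw [hF]
  simp only [this]
  rw [← neg_mul l, mul_pow]
  ring

/-- The spectral density of the Mittag-Leffler density, in the logarithmic variable. -/
noncomputable def mittagLefflerSpectral (α l u : ℝ) : ℝ :=
  l * sin (π * α) / π *
    (exp (α * u) / (exp (α * u) ^ 2 + 2 * l * cos (π * α) * exp (α * u) + l ^ 2))

theorem sin_pi_mul_pos {α : ℝ} (hα : α ∈ Ioo (0 : ℝ) 1) : 0 < sin (π * α) :=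
  sin_pos_of_pos_of_lt_pi (mul_pos pi_pos hα.1) (mul_lt_of_lt_one_right pi_pos hα.2)

theorem sq_mul_sin_sq_le (l ρ θ : ℝ) :
    l ^ 2 * sin θ ^ 2 ≤ ρ ^ 2 + 2 * l * cos θ * ρ + l ^ 2 := by
  nlinarith [sq_nonneg (ρ + l * cos θ), sin_sq_add_cos_sq θ]

theorem mittagLefflerSpectral_denom_pos {α l : ℝ} (hα : α ∈ Ioo (0 : ℝ) 1) (hl : 0 < l)
    (u : ℝ) : 0 < exp (α * u) ^ 2 + 2 * l * cos (π * α) * exp (α * u) + l ^ 2 := by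
  have := sin_pi_mul_pos hα
  exact lt_of_lt_of_le (by positivity) (sq_mul_sin_sq_le l (exp (α * u)) (π * α))

theorem mittagLefflerSpectral_nonneg {α l : ℝ} (hα : α ∈ Ioo (0 : ℝ) 1) (hl : 0 < l) (u : ℝ) :
    0 ≤ mittagLefflerSpectral α l u := by
  have := sin_pi_mul_pos hα
  have := mittagLefflerSpectral_denom_pos hα hl u
  unfold mittagLefflerSpectral
  positivity

theorem continuous_mittagLefflerSpectral {α l : ℝ} (hα : α ∈ Ioo (0 : ℝ) 1) (hl : 0 < l) :
    Continuous (mittagLefflerSpectral α l) := by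
  unfold mittagLefflerSpectral
  refine continuous_const.mul (Continuous.div (by fun_prop) (by fun_prop) fun u ↦ ?_)
  exact (mittagLefflerSpectral_denom_pos hα hl u).ne'

theorem integrable_mittagLefflerSpectral {α l : ℝ} (hα : α ∈ Ioo (0 : ℝ) 1) (hl : 0 < l) :
    Integrable (mittagLefflerSpectral α l) := by
  have hsin := sin_pi_mul_pos hα
  have hmeas := (continuous_mittagLefflerSpectral hα hl).aestronglyMeasurable (μ := volume)
  rw [← integrableOn_univ, ← Iic_union_Ioi (a := (0 : ℝ)), integrableOn_union]
  constructor
  · refine Integrable.mono' (((integrableOn_exp_mul_Iic hα.1 0).const_mul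
      (l * sin (π * α) / π * (l ^ 2 * sin (π * α) ^ 2)⁻¹))) hmeas.restrict (.of_forall fun u ↦ ?_)
    rw [norm_of_nonneg (mittagLefflerSpectral_nonneg hα hl u), mittagLefflerSpectral,
      mul_assoc (l * sin (π * α) / π),
      div_eq_inv_mul _ (_ + _)]
    gcongr
    exact sq_mul_sin_sq_le l (exp (α * u)) (π * α)
  · refine Integrable.mono' (((integrableOn_exp_mul_Ioi (neg_lt_zero.2 hα.1) 0).const_mul
      (l * sin (π * α) / π * (sin (π * α) ^ 2)⁻¹))) hmeas.restrict (.of_forall fun u ↦ ?_)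
    rw [norm_of_nonneg (mittagLefflerSpectral_nonneg hα hl u), mittagLefflerSpectral,
      mul_assoc (l * sin (π * α) / π)]
    have hb := sq_mul_sin_sq_le (exp (α * u)) l (π * α)
    gcongr
    rw [neg_mul, exp_neg, ← mul_inv]
    rw [div_le_iff₀ (mittagLefflerSpectral_denom_pos hα hl u), inv_mul_eq_div,
      le_div_iff₀ (by positivity)]
    linarith

theorem Complex.exp_mul_add_ofReal_ne_zero {α l : ℝ} (hα : α ∈ Ioo (0 : ℝ) 1) (hl : 0 < l)
    {w : ℂ} (hw : |w.im| ≤ π) : Complex.exp (α * w) + l ≠ 0 := by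
  intro h
  have hre := congrArg Complex.re h
  have him := congrArg Complex.im h
  simp only [Complex.add_re, Complex.add_im, Complex.exp_re, Complex.exp_im, Complex.mul_re,
    Complex.mul_im, Complex.ofReal_re, Complex.ofReal_im, zero_mul, sub_zero, add_zero,
    Complex.zero_re, Complex.zero_im, mul_eq_zero, (exp_pos _).ne', false_or] at hre him
  have hlt : |α * w.im| < π := by
    rw [abs_mul, abs_of_pos hα.1]
    calc α * |w.im| ≤ α * π := by have := hα.1; gcongr
      _ < π := mul_lt_of_lt_one_left pi_pos hα.2
  rw [abs_lt] at hlt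
  rw [(sin_eq_zero_iff_of_lt_of_lt hlt.1 hlt.2).1 him, Real.cos_zero] at hre
  linarith [exp_pos (α * w.re)]

/-- The symbol `l / (s ^ α + l)` in the logarithmic variable, on the horizontal lines
`Im w = ±π`, jumps by the spectral density. -/
theorem mittagLefflerSpectral_jump {α l : ℝ} (hα : α ∈ Ioo (0 : ℝ) 1) (hl : 0 < l) (u : ℝ) :
    (l / (Complex.exp (α * (u + ((-π : ℝ) : ℂ) * Complex.I)) + l) : ℂ) -
      l / (Complex.exp (α * (u + (π : ℂ) * Complex.I)) + l) =
      2 * π * Complex.I * mittagLefflerSpectral α l u := by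
  have h1 : Complex.exp (α * (u + (π : ℂ) * Complex.I)) =
      (exp (α * u) : ℝ) * ((cos (π * α) : ℝ) + (sin (π * α) : ℝ) * Complex.I) := by
    rw [Complex.ofReal_exp, Complex.ofReal_cos, Complex.ofReal_sin, ← Complex.exp_mul_I,
      ← Complex.exp_add]
    push_cast
    ring_nf
  have h2 : Complex.exp (α * (u + ((-π : ℝ) : ℂ) * Complex.I)) =
      (exp (α * u) : ℝ) * ((cos (π * α) : ℝ) - (sin (π * α) : ℝ) * Complex.I) := by
    have : (cos (π * α) : ℝ) - (sin (π * α) : ℝ) * Complex.I =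
        ((cos (-(π * α)) : ℝ) : ℂ) + (sin (-(π * α)) : ℝ) * Complex.I := by
      rw [cos_neg, sin_neg]; push_cast; ring
    rw [this, Complex.ofReal_exp, Complex.ofReal_cos, Complex.ofReal_sin, ← Complex.exp_mul_I,
      ← Complex.exp_add]
    push_cast
    ring_nf
  have hn1 := Complex.exp_mul_add_ofReal_ne_zero hα hl (w := u + (π : ℂ) * Complex.I)
    (by simp [abs_of_pos pi_pos])
  have hn2 := Complex.exp_mul_add_ofReal_ne_zero hα hl (w := u + ((-π : ℝ) : ℂ) * Complex.I)
    (by simp [abs_of_pos pi_pos])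
  rw [h1] at hn1 ⊢
  rw [h2] at hn2 ⊢
  have hd : ((exp (α * u) ^ 2 + 2 * l * cos (π * α) * exp (α * u) + l ^ 2 : ℝ) : ℂ) =
      ((exp (α * u) : ℝ) * ((cos (π * α) : ℝ) - (sin (π * α) : ℝ) * Complex.I) + l) *
      ((exp (α * u) : ℝ) * ((cos (π * α) : ℝ) + (sin (π * α) : ℝ) * Complex.I) + l) := by
    have hsc : ((sin (π * α) : ℝ) : ℂ) ^ 2 + ((cos (π * α) : ℝ) : ℂ) ^ 2 = 1 := by
      exact_mod_cast sin_sq_add_cos_sq (π * α)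
    have hI := Complex.I_sq
    push_cast [-Complex.ofReal_exp, -Complex.ofReal_cos, -Complex.ofReal_sin]
    linear_combination (-((exp (α * u) : ℝ) : ℂ) ^ 2) * hsc +
      ((exp (α * u) : ℝ) : ℂ) ^ 2 * ((sin (π * α) : ℝ) : ℂ) ^ 2 * hI
  have hpi : (π : ℂ) ≠ 0 := by exact_mod_cast pi_ne_zero
  rw [mittagLefflerSpectral, Complex.ofReal_mul, Complex.ofReal_div, Complex.ofReal_div _ (_ + _),
    hd, div_sub_div _ _ hn2 hn1, Complex.ofReal_mul]
  field_simp
  ring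

theorem integrable_mittagLefflerSpectral_mul {α l s : ℝ} (hα : α ∈ Ioo (0 : ℝ) 1) (hl : 0 < l)
    (hs : 0 ≤ s) : Integrable fun u ↦ mittagLefflerSpectral α l u * (exp u / (s + exp u)) := by
  have hpos (u : ℝ) : 0 < s + exp u := by positivity
  refine (integrable_mittagLefflerSpectral hα hl).mono ((continuous_mittagLefflerSpectral hα hl).mul
    (Continuous.div (by fun_prop) (by fun_prop) fun u ↦ (hpos u).ne')).aestronglyMeasurable
    (.of_forall fun u ↦ ?_)
  rw [norm_mul]
  refine mul_le_of_le_one_right (norm_nonneg _) ?_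
  rw [norm_of_nonneg (by positivity), div_le_one (hpos u)]
  linarith

theorem Complex.exp_ne_ofReal_of_abs_im_le_pi {s : ℝ} (hs : 0 < s) {w : ℂ} (hw : |w.im| ≤ π)
    (hne : w ≠ Real.log s) : Complex.exp w ≠ s := by
  intro h
  rw [← Real.exp_log hs, Complex.ofReal_exp, Complex.exp_eq_exp_iff_exists_int] at h
  obtain ⟨n, hn⟩ := h
  have him : w.im = n * (2 * π) := by
    rw [hn]
    simp
  rw [him, abs_mul, abs_of_pos two_pi_pos] at hw
  have hn1 : |(n : ℝ)| < 1 := by nlinarith [pi_pos]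
  have hn0 : n = 0 := Int.abs_lt_one_iff.1 (by exact_mod_cast hn1)
  exact hne (by rw [hn, hn0]; simp)

theorem norm_ofReal_mul_exp_add_mul_I (a x y : ℝ) :
    ‖Complex.exp (a * (x + y * Complex.I))‖ = exp (a * x) := by
  simp [Complex.norm_exp]

/-- If `Q` is uniformly close to `c` on the vertical segments `[r - iπ, r + iπ]` as `r` varies
along a filter, then its integrals along them tend to `2πc`. -/
theorem tendsto_intervalIntegral_vertical {Q : ℂ → ℂ} {c : ℂ} {ε : ℝ → ℝ} {f : Filter ℝ}
    (hε : Tendsto ε f (𝓝 0))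
    (hQc : ∀ r : ℝ, ContinuousOn (fun y : ℝ ↦ Q (r + (y : ℂ) * Complex.I)) (Icc (-π) π))
    (hQ : ∀ᶠ r : ℝ in f, ∀ y ∈ Icc (-π) π, ‖Q (r + (y : ℂ) * Complex.I) - c‖ ≤ ε r) :
    Tendsto (fun r : ℝ ↦ ∫ y in (-π)..π, Q (r + (y : ℂ) * Complex.I)) f (𝓝 (2 * π * c)) := by
  rw [tendsto_iff_norm_sub_tendsto_zero]
  refine squeeze_zero' (.of_forall fun _ ↦ norm_nonneg _) ?_
    (by simpa only [zero_mul] using hε.mul_const |π - -π|)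
  filter_upwards [hQ] with r hr
  have hπ : -π ≤ π := by linarith [pi_pos]
  have hc : IntervalIntegrable (fun y : ℝ ↦ Q (r + (y : ℂ) * Complex.I)) volume (-π) π :=
    (hQc r).intervalIntegrable_of_Icc hπ
  have : (2 * π * c : ℂ) = ∫ y in (-π)..π, c := by
    rw [intervalIntegral.integral_const, Complex.real_smul]
    push_cast
    ring
  rw [this, ← intervalIntegral.integral_sub hc (by simp)]
  refine intervalIntegral.norm_integral_le_of_norm_le_const fun y hy ↦ hr y ?_
  rw [uIoc_of_le hπ] at hy
  exact Ioc_subset_Icc_self hy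

/-- The Stieltjes transform of the spectral density. -/
theorem integral_mittagLefflerSpectral_mul {α l s : ℝ} (hα : α ∈ Ioo (0 : ℝ) 1) (hl : 0 < l)
    (hs : 0 < s) :
    ∫ u, mittagLefflerSpectral α l u * (exp u / (s + exp u)) = l / (s ^ α + l) := by
  set φ : ℂ → ℂ := fun w ↦ l / (Complex.exp (α * w) + l) with hφ
  set w₀ : ℂ := (log s : ℂ) with hw₀
  have hexpw₀ : Complex.exp w₀ = s := by rw [hw₀, ← Complex.ofReal_exp, exp_log hs]
  have hφd {w : ℂ} (hw : |w.im| ≤ π) : DifferentiableAt ℂ φ w := by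
    have := Complex.exp_mul_add_ofReal_ne_zero hα hl hw
    fun_prop (disch := assumption)
  set Q : ℂ → ℂ := fun w ↦ dslope φ w₀ w * Complex.exp w / dslope Complex.exp w₀ w with hQ
  have hQ_ne {w : ℂ} (hw : w ≠ w₀) : Q w = (φ w - φ w₀) * Complex.exp w / (Complex.exp w - s) := by
    rw [hQ]
    simp only [dslope_of_ne _ hw, slope_def_field, hexpw₀]
    have : w - w₀ ≠ 0 := sub_ne_zero.2 hw
    field_simp
  have hden {w : ℂ} (hw : |w.im| ≤ π) : dslope Complex.exp w₀ w ≠ 0 := by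
    rcases eq_or_ne w w₀ with rfl | hne
    · simp
    · rw [dslope_of_ne _ hne, slope_def_field, hexpw₀]
      exact div_ne_zero (sub_ne_zero.2 (Complex.exp_ne_ofReal_of_abs_im_le_pi hs hw hne))
        (sub_ne_zero.2 hne)
  have hQd {w : ℂ} (hw : |w.im| ≤ π) (hne : w ≠ w₀) : DifferentiableAt ℂ Q w :=
    (((differentiableAt_dslope_of_ne hne).2 (hφd hw)).mul Complex.differentiableAt_exp).div
      ((differentiableAt_dslope_of_ne hne).2 Complex.differentiableAt_exp) (hden hw)
  have hQc {w : ℂ} (hw : |w.im| ≤ π) : ContinuousAt Q w := by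
    rcases eq_or_ne w w₀ with rfl | hne
    · exact ((continuousAt_dslope_same.2 (hφd hw)).mul
        Complex.continuous_exp.continuousAt).div
        (continuousAt_dslope_same.2 Complex.differentiableAt_exp) (hden hw)
    · exact (hQd hw hne).continuousAt
  have hrect (R : ℝ) : (∫ x in (-R)..R, Q (x + ((-π : ℝ) : ℂ) * Complex.I)) -
      (∫ x in (-R)..R, Q (x + (π : ℂ) * Complex.I)) +
      Complex.I * (∫ y in (-π)..π, Q (R + (y : ℂ) * Complex.I)) -
      Complex.I * (∫ y in (-π)..π, Q ((-R : ℝ) + (y : ℂ) * Complex.I)) = 0 := by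
    have := Complex.integral_boundary_rect_eq_zero_of_differentiable_on_off_countable Q
      ⟨-R, -π⟩ ⟨R, π⟩ {w₀} (countable_singleton _) (fun w hw ↦ ?_) (fun w hw ↦ ?_)
    · simpa using this
    · rw [Complex.mem_reProdIm] at hw
      have hwi := hw.2
      rw [uIcc_of_le (by linarith [pi_pos])] at hwi
      exact (hQc (abs_le.2 hwi)).continuousWithinAt
    · have hwi := (Complex.mem_reProdIm.1 hw.1).2
      simp only at hwi
      rw [min_eq_left (by linarith [pi_pos]), max_eq_right (by linarith [pi_pos])] at hwi
      exact hQd (abs_le.2 ⟨hwi.1.le, hwi.2.le⟩) hw.2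
  have hhoriz (R : ℝ) : (∫ x in (-R)..R, Q (x + ((-π : ℝ) : ℂ) * Complex.I)) -
      (∫ x in (-R)..R, Q (x + (π : ℂ) * Complex.I)) = 2 * π * Complex.I *
      ((∫ x in (-R)..R, mittagLefflerSpectral α l x * (exp x / (s + exp x)) : ℝ) : ℂ) := by
    have hcont {y : ℝ} (hy : |y| ≤ π) : Continuous fun x : ℝ ↦ Q (x + (y : ℂ) * Complex.I) :=
      continuous_iff_continuousAt.2 fun x ↦ ContinuousAt.comp (f := fun x : ℝ ↦
        (x + (y : ℂ) * Complex.I : ℂ)) (hQc (by simpa using hy)) (by fun_prop)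
    rw [← intervalIntegral.integral_sub
      ((hcont (by rw [abs_neg, abs_of_pos pi_pos])).intervalIntegrable _ _)
      ((hcont (abs_of_pos pi_pos).le).intervalIntegrable _ _),
      ← intervalIntegral.integral_ofReal, ← intervalIntegral.integral_const_mul]
    refine intervalIntegral.integral_congr fun x _ ↦ ?_
    have hne {y : ℝ} (hy : y ≠ 0) : (x + (y : ℂ) * Complex.I : ℂ) ≠ w₀ := fun h ↦ hy <| by
      simpa [hw₀] using congrArg Complex.im h
    have hE1 : Complex.exp (x + (π : ℂ) * Complex.I) = -(exp x : ℝ) := by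
      rw [Complex.exp_add, Complex.exp_pi_mul_I, Complex.ofReal_exp, mul_neg_one]
    have hE2 : Complex.exp (x + ((-π : ℝ) : ℂ) * Complex.I) = -(exp x : ℝ) := by
      rw [Complex.exp_add, Complex.ofReal_neg, neg_mul, Complex.exp_neg, Complex.exp_pi_mul_I,
        Complex.ofReal_exp, inv_neg, inv_one, mul_neg_one]
    have hsx : (s + (exp x : ℝ) : ℂ) ≠ 0 := by
      exact_mod_cast (add_pos hs (exp_pos x)).ne'
    have hsx' : (-(exp x : ℝ) - s : ℂ) ≠ 0 := by
      rw [← neg_add', add_comm]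
      exact neg_ne_zero.2 hsx
    have hjump := mittagLefflerSpectral_jump hα hl x
    rw [hQ_ne (hne (neg_ne_zero.2 pi_ne_zero)), hQ_ne (hne pi_ne_zero), hE1, hE2,
      Complex.ofReal_mul, ← mul_assoc, ← hjump, Complex.ofReal_div, Complex.ofReal_add]
    simp only [hφ]
    rw [← sub_div, ← sub_mul, sub_sub_sub_cancel_right, mul_div_assoc]
    congr 1
    rw [div_eq_div_iff hsx' hsx]
    ring
  have hvert {r : ℝ} (hr : exp r ≠ s) (y : ℝ) : (r + (y : ℂ) * Complex.I : ℂ) ≠ w₀ := fun h ↦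
    hr <| by
      have := congrArg (fun z ↦ ‖Complex.exp z‖) h
      simpa [hexpw₀, Complex.norm_exp, abs_of_pos hs] using this
  have hvert_cont (r : ℝ) :
      ContinuousOn (fun y : ℝ ↦ Q (r + (y : ℂ) * Complex.I)) (Icc (-π) π) := fun y hy ↦
    (ContinuousAt.comp (f := fun y : ℝ ↦ (r + (y : ℂ) * Complex.I : ℂ))
      (hQc (by simpa using abs_le.2 hy)) (by fun_prop)).continuousWithinAt
  have hright : Tendsto (fun R : ℝ ↦ ∫ y in (-π)..π, Q (R + (y : ℂ) * Complex.I)) atTop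
      (𝓝 (2 * π * -φ w₀)) := by
    have hexpα : Tendsto (fun r : ℝ ↦ exp (α * r)) atTop atTop :=
      tendsto_exp_atTop.comp (tendsto_id.const_mul_atTop hα.1)
    refine tendsto_intervalIntegral_vertical (ε := fun r ↦ l / (exp (α * r) - l) *
      (1 + s / (exp r - s)) + ‖φ w₀‖ * (s / (exp r - s))) ?_ hvert_cont ?_
    · have h1 : Tendsto (fun r : ℝ ↦ l / (exp (α * r) - l)) atTop (𝓝 0) :=
        tendsto_const_nhds.div_atTop (tendsto_atTop_add_const_right _ (-l) hexpα)
      have h2 : Tendsto (fun r : ℝ ↦ s / (exp r - s)) atTop (𝓝 0) :=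
        tendsto_const_nhds.div_atTop (tendsto_atTop_add_const_right _ (-s) tendsto_exp_atTop)
      simpa using (h1.mul (h2.const_add 1)).add (h2.const_mul ‖φ w₀‖)
    · filter_upwards [tendsto_exp_atTop.eventually_gt_atTop s, hexpα.eventually_gt_atTop l]
        with r hr hrα y hy
      rw [hQ_ne (hvert hr.ne' y)]
      set w : ℂ := r + (y : ℂ) * Complex.I
      have hE : exp r - s ≤ ‖Complex.exp w - s‖ := by
        have := norm_sub_norm_le (Complex.exp w) s
        simpa [w, Complex.norm_exp, abs_of_pos hs] using this
      have hφw : ‖φ w‖ ≤ l / (exp (α * r) - l) := by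
        have := norm_sub_le_norm_add (Complex.exp (α * w)) l
        rw [norm_ofReal_mul_exp_add_mul_I, Complex.norm_real, norm_of_nonneg hl.le] at this
        rw [hφ, norm_div, Complex.norm_real, norm_of_nonneg hl.le]
        have := sub_pos.2 hrα
        gcongr
      have hne : Complex.exp w - s ≠ 0 := norm_pos_iff.1 ((sub_pos.2 hr).trans_le hE)
      have hsE : ‖s / (Complex.exp w - s)‖ ≤ s / (exp r - s) := by
        rw [norm_div, Complex.norm_real, norm_of_nonneg hs.le]
        have := sub_pos.2 hr
        gcongr
      have hsplit : (φ w - φ w₀) * Complex.exp w / (Complex.exp w - s) - -φ w₀ =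
          φ w * (1 + s / (Complex.exp w - s)) - φ w₀ * (s / (Complex.exp w - s)) := by
        field_simp
        ring
      have h1 : ‖1 + s / (Complex.exp w - s)‖ ≤ 1 + s / (exp r - s) :=
        (norm_add_le _ _).trans (by rw [norm_one]; gcongr)
      rw [hsplit]
      refine (norm_sub_le _ _).trans ?_
      rw [norm_mul, norm_mul]
      have := (norm_nonneg _).trans hφw
      gcongr
  have hleft : Tendsto (fun r : ℝ ↦ ∫ y in (-π)..π, Q (r + (y : ℂ) * Complex.I)) atBot
      (𝓝 (2 * π * 0)) := by
    have hexpα : Tendsto (fun r : ℝ ↦ exp (α * r)) atBot (𝓝 0) :=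
      tendsto_exp_atBot.comp (tendsto_id.const_mul_atBot hα.1)
    refine tendsto_intervalIntegral_vertical (ε := fun r ↦ (l / (l - exp (α * r)) + ‖φ w₀‖) *
      (exp r / (s - exp r))) ?_ hvert_cont ?_
    · have h1 := (tendsto_const_nhds (x := l)).div (hexpα.const_sub l) (by simpa using hl.ne')
      have h2 := tendsto_exp_atBot.div (tendsto_exp_atBot.const_sub s) (by simpa using hs.ne')
      simpa using (h1.add_const ‖φ w₀‖).mul h2
    · filter_upwards [tendsto_exp_atBot.eventually_lt_const hs, hexpα.eventually_lt_const hl]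
        with r hr hrα y hy
      rw [hQ_ne (hvert hr.ne y), sub_zero]
      set w : ℂ := r + (y : ℂ) * Complex.I
      have hEn : ‖Complex.exp w‖ = exp r := by simp [w, Complex.norm_exp]
      have hE : s - exp r ≤ ‖Complex.exp w - s‖ := by
        have := norm_sub_norm_le (s : ℂ) (Complex.exp w)
        rwa [hEn, Complex.norm_real, norm_of_nonneg hs.le, norm_sub_rev] at this
      have hφw : ‖φ w‖ ≤ l / (l - exp (α * r)) := by
        have := norm_sub_le_norm_add (l : ℂ) (Complex.exp (α * w))
        rw [norm_ofReal_mul_exp_add_mul_I, Complex.norm_real, norm_of_nonneg hl.le,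
          add_comm] at this
        rw [hφ, norm_div, Complex.norm_real, norm_of_nonneg hl.le]
        have := sub_pos.2 hrα
        gcongr
      rw [mul_div_assoc, norm_mul, norm_div, hEn]
      have := sub_pos.2 hr
      have := (norm_nonneg _).trans hφw
      gcongr
      exact (norm_sub_le _ _).trans (by gcongr)
  have hψ : Integrable fun u ↦ mittagLefflerSpectral α l u * (exp u / (s + exp u)) :=
    integrable_mittagLefflerSpectral_mul hα hl hs.le
  have hmid := (Complex.continuous_ofReal.tendsto _).comp
    (intervalIntegral_tendsto_integral hψ tendsto_neg_atTop_atBot tendsto_id)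
  have htotal := ((hmid.const_mul (2 * π * Complex.I)).add (hright.const_mul Complex.I)).sub
    ((hleft.comp tendsto_neg_atTop_atBot).const_mul Complex.I)
  have hlim := tendsto_nhds_unique htotal
    (tendsto_const_nhds.congr fun R ↦ (hrect R).symm.trans (by rw [hhoriz R]; rfl))
  have hφw₀ : φ w₀ = ((l / (s ^ α + l) : ℝ) : ℂ) := by
    have : Complex.exp (α * w₀) = ((s ^ α : ℝ) : ℂ) := by
      rw [hw₀, rpow_def_of_pos hs, mul_comm (log s)]
      push_cast
      rfl
    rw [hφ]
    simp only [this]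
    push_cast
    rfl
  have hfactor : 2 * π * Complex.I *
      (((∫ u, mittagLefflerSpectral α l u * (exp u / (s + exp u)) : ℝ) : ℂ) - φ w₀) = 0 := by
    linear_combination hlim
  rw [hφw₀, mul_eq_zero, or_iff_right Complex.two_pi_I_ne_zero, sub_eq_zero] at hfactor
  exact_mod_cast hfactor

/-- The Mittag-Leffler density as a mixture of exponential densities. -/
noncomputable def mittagLefflerMixture (α l x : ℝ) : ℝ :=
  ∫ u, mittagLefflerSpectral α l u * (exp u * exp (-(x * exp u)))

theorem integrable_mixture_kernel {α l s : ℝ} (hα : α ∈ Ioo (0 : ℝ) 1) (hl : 0 < l)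
    (hs : 0 ≤ s) :
    Integrable (fun p : ℝ × ℝ ↦ exp (-(s * p.1)) *
      (mittagLefflerSpectral α l p.2 * (exp p.2 * exp (-(p.1 * exp p.2)))))
      ((volume.restrict (Ioi 0)).prod volume) ∧
    ∀ u, ∫ x in Ioi (0 : ℝ), exp (-(s * x)) *
      (mittagLefflerSpectral α l u * (exp u * exp (-(x * exp u)))) =
        mittagLefflerSpectral α l u * (exp u / (s + exp u)) := by
  have hcont := continuous_mittagLefflerSpectral hα hl
  have hpos (u : ℝ) : 0 < s + exp u := by positivity
  have hker (u x : ℝ) : exp (-(s * x)) *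
      (mittagLefflerSpectral α l u * (exp u * exp (-(x * exp u)))) =
        mittagLefflerSpectral α l u * exp u * exp (-(s + exp u) * x) := by
    rw [show -(s + exp u) * x = -(s * x) + -(x * exp u) by ring, exp_add]
    ring
  have hint (u : ℝ) : ∫ x in Ioi (0 : ℝ), exp (-(s * x)) *
      (mittagLefflerSpectral α l u * (exp u * exp (-(x * exp u)))) =
        mittagLefflerSpectral α l u * (exp u / (s + exp u)) := by
    simp_rw [hker, integral_const_mul, integral_exp_mul_Ioi (neg_lt_zero.2 (hpos u))]
    simp only [mul_zero, exp_zero, neg_div_neg_eq]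
    ring
  refine ⟨(integrable_prod_iff' (by fun_prop)).2 ⟨.of_forall fun u ↦ ?_, ?_⟩, hint⟩
  · simp_rw [hker]
    exact (integrableOn_exp_mul_Ioi (neg_lt_zero.2 (hpos u)) 0).const_mul _
  · have hnorm (u x : ℝ) : ‖exp (-(s * x)) *
        (mittagLefflerSpectral α l u * (exp u * exp (-(x * exp u))))‖ = exp (-(s * x)) *
        (mittagLefflerSpectral α l u * (exp u * exp (-(x * exp u)))) := by
      have := mittagLefflerSpectral_nonneg hα hl u
      exact norm_of_nonneg (by positivity)
    simp_rw [hnorm, hint]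
    exact integrable_mittagLefflerSpectral_mul hα hl hs

theorem integrableOn_exp_neg_mul_mittagLefflerMixture {α l s : ℝ} (hα : α ∈ Ioo (0 : ℝ) 1)
    (hl : 0 < l) (hs : 0 ≤ s) :
    IntegrableOn (fun x ↦ exp (-(s * x)) * mittagLefflerMixture α l x) (Ioi 0) := by
  have h := (integrable_mixture_kernel hα hl hs).1.integral_prod_left
  simp only [integral_const_mul] at h
  exact h

theorem integral_exp_neg_mul_mittagLefflerMixture {α l s : ℝ} (hα : α ∈ Ioo (0 : ℝ) 1)
    (hl : 0 < l) (hs : 0 ≤ s) :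
    ∫ x in Ioi (0 : ℝ), exp (-(s * x)) * mittagLefflerMixture α l x =
      ∫ u, mittagLefflerSpectral α l u * (exp u / (s + exp u)) := by
  obtain ⟨hint, hval⟩ := integrable_mixture_kernel hα hl hs
  simp_rw [← hval, integral_integral_swap (f := fun u x ↦ exp (-(s * x)) *
      (mittagLefflerSpectral α l u * (exp u * exp (-(x * exp u))))) hint.swap,
    integral_const_mul]
  rfl

theorem integral_mittagLefflerSpectral {α l : ℝ} (hα : α ∈ Ioo (0 : ℝ) 1) (hl : 0 < l) :
    ∫ u, mittagLefflerSpectral α l u = 1 := by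
  have hlim : Tendsto (fun s : ℝ ↦ ∫ u, mittagLefflerSpectral α l u * (exp u / (s + exp u)))
      (𝓝[>] 0) (𝓝 (∫ u, mittagLefflerSpectral α l u)) := by
    have hcont := continuous_mittagLefflerSpectral hα hl
    refine tendsto_integral_filter_of_dominated_convergence (mittagLefflerSpectral α l) ?_ ?_
      (integrable_mittagLefflerSpectral hα hl) (.of_forall fun u ↦ ?_)
    · filter_upwards [self_mem_nhdsWithin] with s hs
      have hs' : 0 < s := hs
      exact (hcont.mul (Continuous.div (by fun_prop) (by fun_prop)
        fun u ↦ (by positivity))).aestronglyMeasurable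
    · filter_upwards [self_mem_nhdsWithin] with s hs
      have hs' : 0 < s := hs
      refine .of_forall fun u ↦ ?_
      have := mittagLefflerSpectral_nonneg hα hl u
      rw [norm_of_nonneg (by positivity)]
      refine mul_le_of_le_one_right this ?_
      rw [div_le_one (by positivity)]
      linarith
    · have : ContinuousAt (fun s : ℝ ↦ mittagLefflerSpectral α l u * (exp u / (s + exp u))) 0 :=
        by fun_prop (disch := simp)
      simpa [ContinuousAt] using this.tendsto.mono_left (nhdsWithin_le_nhds (s := Ioi 0))
  have hval : Tendsto (fun s : ℝ ↦ l / (s ^ α + l)) (𝓝[>] 0) (𝓝 1) := by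
    have : ContinuousAt (fun s : ℝ ↦ l / (s ^ α + l)) 0 := by
      refine continuousAt_const.div ((continuousAt_id.rpow_const (.inr hα.1.le)).add
        continuousAt_const) ?_
      simp [zero_rpow hα.1.ne', hl.ne']
    have := this.tendsto.mono_left (nhdsWithin_le_nhds (s := Ioi 0))
    simpa [zero_rpow hα.1.ne', hl.ne'] using this
  refine tendsto_nhds_unique (hlim.congr' ?_) hval
  filter_upwards [self_mem_nhdsWithin] with s hs
  exact integral_mittagLefflerSpectral_mul hα hl hs

theorem mittagLeffler_one_one (z : ℝ) : mittagLeffler 1 1 z = exp z := by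
  simp only [mittagLeffler, one_mul, Gamma_nat_eq_factorial]
  rw [exp_eq_exp_ℝ, NormedSpace.exp_eq_tsum_div]

theorem mittagLeffler_density_ae_eq_mixture {α l : ℝ} (hα : α ∈ Ioo (0 : ℝ) 1) (hl : 0 < l) :
    (fun x ↦ l * x ^ (α - 1) * mittagLeffler α α (-(l * x ^ α))) =ᵐ[volume.restrict (Ioi 0)]
      mittagLefflerMixture α l := by
  obtain ⟨s, hs, hls⟩ : ∃ s : ℝ, 0 < s ∧ l < s ^ α :=
    ((eventually_gt_atTop 0).and ((tendsto_rpow_atTop hα.1).eventually_gt_atTop l)).exists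
  have hsn (n : ℕ) : 0 < s + n ∧ l < (s + n) ^ α :=
    ⟨by positivity, hls.trans_le (rpow_le_rpow hs.le (by simp) hα.1.le)⟩
  set f : ℝ → ℝ := fun x ↦ l * x ^ (α - 1) * mittagLeffler α α (-(l * x ^ α))
  have hf (n : ℕ) : ∫ x in Ioi (0 : ℝ), exp (-((s + n) * x)) * f x = l / ((s + n) ^ α + l) :=
    integral_exp_neg_mul_mittagLeffler hα.1 hl (hsn n).1 (hsn n).2
  have hf_int (n : ℕ) : IntegrableOn (fun x ↦ exp (-((s + n) * x)) * f x) (Ioi 0) :=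
    .of_integral_ne_zero (by rw [hf n]; have := (hsn n).1; positivity)
  have hg_int (n : ℕ) := integrableOn_exp_neg_mul_mittagLefflerMixture hα hl (hsn n).1.le
  have hshift (n : ℕ) (x : ℝ) : exp (-(n * x)) *
      (exp (-(s * x)) * f x - exp (-(s * x)) * mittagLefflerMixture α l x) =
      exp (-((s + n) * x)) * f x - exp (-((s + n) * x)) * mittagLefflerMixture α l x := by
    rw [show -((s + n) * x) = -(n * x) + -(s * x) by ring, exp_add]
    ring
  have hzero := ae_eq_zero_of_integral_exp_neg_nat_mul_eq_zero
    (h := fun x ↦ exp (-(s * x)) * f x - exp (-(s * x)) * mittagLefflerMixture α l x)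
    (by
      have h0 := (hf_int 0).sub (hg_int 0)
      simp only [Nat.cast_zero, add_zero] at h0
      exact h0) fun n ↦ by
      simp_rw [hshift]
      rw [integral_sub (hf_int n) (hg_int n), hf n,
        integral_exp_neg_mul_mittagLefflerMixture hα hl (hsn n).1.le,
        integral_mittagLefflerSpectral_mul hα hl (hsn n).1, sub_self]
  filter_upwards [hzero] with x hx
  exact mul_left_cancel₀ (exp_pos _).ne' (sub_eq_zero.1 hx)

theorem integral_mittagLefflerMixture {α l : ℝ} (hα : α ∈ Ioo (0 : ℝ) 1) (hl : 0 < l) :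
    ∫ x in Ioi (0 : ℝ), mittagLefflerMixture α l x = 1 := by
  have := integral_exp_neg_mul_mittagLefflerMixture hα hl le_rfl
  simpa [integral_mittagLefflerSpectral hα hl] using this

end

/-- For `α ∈ (0,1]`, `λ₀ > 0`, the Mittag-Leffler density is normalized on `(0,∞)`:
`∫_0^∞ λ₀ x^{α−1} E_{α,α}(−λ₀ x^α) dx = 1`. -/
theorem mittagLeffler_density_normalized (α lam₀ : ℝ)
    (hα : α ∈ Set.Ioc (0 : ℝ) 1) (hlam : 0 < lam₀) :
    (∫ x in Set.Ioi (0 : ℝ), lam₀ * x ^ (α - 1) * mittagLeffler α α (-(lam₀ * x ^ α))) = 1 := by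
  rcases hα.2.eq_or_lt with rfl | hα1
  · have := integral_exp_mul_Ioi (neg_lt_zero.2 hlam) 0
    simp only [sub_self, Real.rpow_zero, mul_one, Real.rpow_one, mittagLeffler_one_one,
      integral_const_mul, ← neg_mul]
    rw [this]
    simp [hlam.ne']
  · rw [integral_congr_ae (mittagLeffler_density_ae_eq_mixture ⟨hα.1, hα1⟩ hlam),
      integral_mittagLefflerMixture ⟨hα.1, hα1⟩ hlam]
end
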